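/- arXiv:2505.02336 — 2 statements merged into one kernel-verified Lean document; each statement's English description precedes it below -/
import Mathlib

section
/- For every sequence ω = ω^0ω^1ω^2… ∈ (D_b^m)^{ℕ₀}, the Hausdorff dimension of the survivor set K^ω equals liminf_{n→∞} log|Σ_n^ω| / (n log b), and this quantity also equals liminf_{n→∞} (1/(n log b)) · log‖A_{ω^0}A_{ω^1}⋯A_{ω^{n−1}}‖. -/
/-!
Counting admissible words carries the whole proof. The hypothesis `3 ≤ b` enters through one
estimate: dropping the first position of the forbidden data divides the number of admissible words
by at least `5/2` (`five_mul_card_le`). Indeed, prepending a letter creates `b` words, and those lost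
to the forbidden window at position `0` are at most as many as the admissible continuations after
that window, which by induction form at most a `2/5` share. Summing the resulting geometric series
over the windows that straddle position `k`, every admissible word of length `k` keeps at least a
third of the continuations that satisfy only the constraints beyond position `k`
(`card_words_le_three_mul`). Hence a cylinder of level `k` never contains more than three times the
average number of admissible words of a larger length (`card_fiber_mul_le`), although the subshift
is not stationary.

For the upper bound on the dimension, the cylinders of level `n` cover the survivor set along a
subsequence realising the lower limit. For the lower bound, suppose that `μH[s]` vanishes for some
`s` below the lower limit. By compactness the survivor set has a finite cover by balls with a tiny
sum of `s`-th powers of radii. Each ball meets at most three cylinders of the level given by its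
radius, and by the quasi-uniformity above it captures at most a multiple of (radius) `^ s` of the
admissible words of a large common length `N`; adding up, the balls miss some word of length `N`, a
contradiction. This is a finite form of the mass distribution principle which avoids constructing a
measure.

For the matrix formula, a column sum of `A_{ω^0} ⋯ A_{ω^{n-1}}` counts the admissible words of
length `n + m - 1` with a prescribed end (`colSum_prodA`), so the norm is `|Σ_{n+m-1}^ω|`; the extra
`m - 1` letters change the count by a bounded factor and do not affect the lower limit
(`liminf_shift`).
-/


open MeasureTheory Filter

namespace Paper


/-- The set `Σ_k^ω` of admissible words of length `k`. -/
def SigmaSet (b m : ℕ) (ω : ℕ → Fin m → Fin b) (k : ℕ) : Set (Fin k → Fin b) :=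
  { d | ∀ (i : ℕ) (hi : i + m ≤ k),
      (fun j : Fin m => d ⟨i + j.1, by have := j.isLt; omega⟩) ≠ ω i }

/-- The survivor set `K^ω ⊆ [0,1]`. -/
def Kset (b m : ℕ) (ω : ℕ → Fin m → Fin b) : Set ℝ :=
  { x | ∃ d : ℕ → Fin b,
      (∀ k : ℕ, (fun j : Fin m => d (k + j.1)) ≠ ω k) ∧
      x = ∑' i : ℕ, ((d i : ℕ) : ℝ) / (b : ℝ) ^ (i + 1) }

open Classical in
/-- The adjacency matrix `A_d` of the subshift of finite type with forbidden word `d`. -/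
noncomputable def adjMat (b m : ℕ) (d : Fin m → Fin b) :
    Matrix (Fin (m - 1) → Fin b) (Fin (m - 1) → Fin b) ℝ :=
  fun u v =>
    if ((∀ (i : ℕ) (h : i + 1 < m - 1), u ⟨i + 1, h⟩ = v ⟨i, by omega⟩) ∧
        ¬ ((∀ (j : ℕ) (h : j < m - 1), u ⟨j, h⟩ = d ⟨j, by omega⟩) ∧
           (∀ (h2 : m - 2 < m - 1), v ⟨m - 2, h2⟩ = d ⟨m - 1, by omega⟩)))
    then 1 else 0

/-- The norm `‖M‖ = ∑_{i,j} |m_{ij}|` of a real square matrix. -/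
noncomputable def matNorm {n : Type*} [Fintype n] (M : Matrix n n ℝ) : ℝ :=
  ∑ i, ∑ j, |M i j|

/-- The product `A_{ω^0} A_{ω^1} ⋯ A_{ω^{n-1}}`. -/
noncomputable def prodA (b m : ℕ) (ω : ℕ → Fin m → Fin b) (n : ℕ) :
    Matrix (Fin (m - 1) → Fin b) (Fin (m - 1) → Fin b) ℝ :=
  ((List.range n).map (fun i => adjMat b m (ω i))).prod

/-- `ω` is progressively overlapping at position `k`. -/
def ProgOverlapAt (b m : ℕ) (ω : ℕ → Fin m → Fin b) (k : ℕ) : Prop :=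
  ∀ j : ℕ, 1 ≤ j → j ≤ min k (m - 1) →
    ∀ (t : ℕ) (h : t + j < m),
      ω k ⟨t, by omega⟩ = ω (k - j) ⟨t + j, h⟩

/-- `ω` is totally distinct at position `k`. -/
def TotDistinctAt (b m : ℕ) (ω : ℕ → Fin m → Fin b) (k : ℕ) : Prop :=
  ∀ j : ℕ, 1 ≤ j → j ≤ min k (m - 1) →
    ¬ (∀ (t : ℕ) (h : t + j < m),
        ω k ⟨t, by omega⟩ = ω (k - j) ⟨t + j, h⟩)

/-- A set `F ⊆ ℝ` is `s`-Ahlfors regular. -/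
def AhlforsRegular (F : Set ℝ) (s : ℝ) : Prop :=
  ∃ c : ℝ, 1 ≤ c ∧ ∀ x ∈ F, ∀ r : ℝ, 0 < r → r < 1 →
    ENNReal.ofReal (c⁻¹ * r ^ s) ≤ Measure.hausdorffMeasure s (F ∩ Metric.closedBall x r) ∧
    Measure.hausdorffMeasure s (F ∩ Metric.closedBall x r) ≤ ENNReal.ofReal (c * r ^ s)


/-! ### Counting admissible words -/

/-- The sequence `f` with its first `i` terms dropped. -/
def shiftBy {α : Type*} (i : ℕ) (f : ℕ → α) : ℕ → α := fun j => f (i + j)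

theorem shiftBy_shiftBy {α : Type*} (i j : ℕ) (f : ℕ → α) :
    shiftBy i (shiftBy j f) = shiftBy (j + i) f := by
  funext t
  simp [shiftBy, add_assoc]

theorem shiftBy_zero {α : Type*} (f : ℕ → α) : shiftBy 0 f = f := by
  funext t
  simp [shiftBy]

section Words

open scoped Classical

variable {b m : ℕ} [NeZero b]

theorem finite_words (ω : ℕ → Fin m → Fin b) (n : ℕ) :
    {d : ℕ → Fin b | (∀ i, n ≤ i → d i = 0) ∧
      ∀ k, k + m ≤ n → (fun j : Fin m => d (k + j.1)) ≠ ω k}.Finite := by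
  apply Set.Finite.of_finite_image (f := fun d (i : Fin n) => d i) (Set.toFinite _)
  intro d hd e he h
  funext i
  by_cases hi : i < n
  · exact congrFun h ⟨i, hi⟩
  · rw [hd.1 i (by omega), he.1 i (by omega)]

/-- The admissible words of length `n`, a word being encoded as a sequence of digits that
vanishes from position `n` on. This encoding avoids dependent lengths when words are cut and
concatenated. -/
noncomputable def words (ω : ℕ → Fin m → Fin b) (n : ℕ) : Finset (ℕ → Fin b) :=
  (finite_words ω n).toFinset

theorem mem_words {ω : ℕ → Fin m → Fin b} {n : ℕ} {d : ℕ → Fin b} :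
    d ∈ words ω n ↔ (∀ i, n ≤ i → d i = 0) ∧
      ∀ k, k + m ≤ n → (fun j : Fin m => d (k + j.1)) ≠ ω k := by
  simp [words]

theorem shiftBy_mem_words {ω : ℕ → Fin m → Fin b} {n i : ℕ} {d : ℕ → Fin b}
    (hd : d ∈ words ω n) (hi : i ≤ n) : shiftBy i d ∈ words (shiftBy i ω) (n - i) := by
  rw [mem_words] at hd ⊢
  refine ⟨fun j hj => hd.1 _ (by omega), fun k hk h => hd.2 (i + k) (by omega) ?_⟩
  rw [← show shiftBy i ω k = ω (i + k) from rfl, ← h]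
  funext j
  simp [shiftBy, add_assoc]

/-- A family of words with a common prefix of length `i`, whose remainders are admissible of
length `l`, has at most as many members as there are admissible words of length `l`. -/
theorem card_le_of_prefix (A : Finset (ℕ → Fin b)) (i : ℕ) (p : ℕ → Fin b)
    (ω : ℕ → Fin m → Fin b) (l : ℕ)
    (h : ∀ d ∈ A, shiftBy i d ∈ words ω l ∧ ∀ j < i, d j = p j) :
    A.card ≤ (words ω l).card := by
  refine Finset.card_le_card_of_injOn (shiftBy i) (fun d hd => (h d hd).1) ?_
  intro d hd e he hde
  funext t
  by_cases ht : t < i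
  · rw [(h d hd).2 t ht, (h e he).2 t ht]
  · have := congrFun hde (t - i)
    simpa [shiftBy, Nat.add_sub_cancel' (not_lt.1 ht)] using this

/-- Of the `b` ways to prepend a letter to each word, only those creating the forbidden window at
position `0` are lost. -/
theorem mul_card_words_le (ω : ℕ → Fin m → Fin b) (l : ℕ) (hm : 2 ≤ m) :
    b * (words (shiftBy 1 ω) l).card ≤ (words ω (l + 1)).card +
      (if m ≤ l + 1 then (words (shiftBy m ω) (l + 1 - m)).card else 0) := by
  let cons : Fin b × (ℕ → Fin b) → ℕ → Fin b := fun x t => if t = 0 then x.1 else x.2 (t - 1)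
  have hsh : ∀ x, shiftBy 1 (cons x) = x.2 := by
    intro x; funext t; simp [shiftBy, cons]
  have hinj : Function.Injective cons := by
    intro x y h
    refine Prod.ext ?_ ?_
    · simpa [cons] using congrFun h 0
    · rw [← hsh x, ← hsh y, h]
  set X := (Finset.univ ×ˢ words (shiftBy 1 ω) l).image cons with hX
  have hXc : X.card = b * (words (shiftBy 1 ω) l).card := by
    rw [hX, Finset.card_image_of_injective _ hinj, Finset.card_product]; simp
  have hXm : ∀ d ∈ X, shiftBy 1 d ∈ words (shiftBy 1 ω) l := by
    intro d hd
    obtain ⟨x, hx, rfl⟩ := Finset.mem_image.1 hd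
    rw [hsh]; exact (Finset.mem_product.1 hx).2
  rw [← hXc, ← Finset.card_filter_add_card_filter_not
    (fun d => m ≤ l + 1 ∧ (fun j : Fin m => d (0 + j.1)) = ω 0), add_comm]
  apply add_le_add
  · apply Finset.card_le_card
    intro d hd
    rw [Finset.mem_filter] at hd
    have h1 := mem_words.1 (hXm d hd.1)
    refine mem_words.2 ⟨fun i hi => ?_, fun k hk h => ?_⟩
    · have := h1.1 (i - 1) (by omega)
      simpa [shiftBy, show 1 + (i - 1) = i by omega] using this
    · rcases Nat.eq_zero_or_pos k with rfl | hk0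
      · exact hd.2 ⟨by omega, h⟩
      · refine h1.2 (k - 1) (by omega) ?_
        rw [show shiftBy 1 ω (k - 1) = ω k by simp [shiftBy, show 1 + (k - 1) = k by omega], ← h]
        funext j
        simp [shiftBy, show 1 + (k - 1 + j.1) = k + j.1 by omega]
  · split_ifs with hml
    · apply card_le_of_prefix _ m (fun t => if h : t < m then ω 0 ⟨t, h⟩ else 0)
      intro d hd
      rw [Finset.mem_filter] at hd
      constructor
      · have := shiftBy_mem_words (hXm d hd.1) (i := m - 1) (by omega)
        rw [shiftBy_shiftBy, shiftBy_shiftBy] at this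
        rwa [show 1 + (m - 1) = m by omega, show l - (m - 1) = l + 1 - m by omega] at this
      · intro j hj
        have := congrFun hd.2.2 ⟨j, hj⟩
        simpa [hj] using this
    · simp [hml]

/-- Removing the first position divides the number of admissible words by at least `5/2`. -/
theorem five_mul_card_le (hb : 3 ≤ b) (hm : 2 ≤ m) (l : ℕ) :
    ∀ ω : ℕ → Fin m → Fin b,
      5 * (words (shiftBy 1 ω) l).card ≤ 2 * (words ω (l + 1)).card := by
  induction l using Nat.strong_induction_on with
  | _ l ih =>
    intro ω
    have h1 := mul_card_words_le ω l hm
    have h3 : 3 * (words (shiftBy 1 ω) l).card ≤ b * (words (shiftBy 1 ω) l).card :=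
      Nat.mul_le_mul_right _ hb
    by_cases hml : m ≤ l + 1
    · rw [if_pos hml] at h1
      have step : ∀ i, i < l → 5 * (words (shiftBy (1 + (i + 1)) ω) (l - (i + 1))).card ≤
          2 * (words (shiftBy (1 + i) ω) (l - i)).card := by
        intro i hi
        have := ih (l - (i + 1)) (by omega) (shiftBy (1 + i) ω)
        rwa [shiftBy_shiftBy, show l - (i + 1) + 1 = l - i by omega] at this
      have key : ∀ i, 1 ≤ i → i ≤ l → 2 * (words (shiftBy (1 + i) ω) (l - i)).card ≤
          (words (shiftBy 1 ω) l).card := by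
        intro i hi
        induction i, hi using Nat.le_induction with
        | base =>
          intro hl
          have := step 0 (by omega)
          simp only [zero_add, add_zero, Nat.sub_zero] at this
          omega
        | succ i hi ih2 =>
          intro hl
          have := step i (by omega)
          have := ih2 (by omega)
          omega
      have := key (m - 1) (by omega) (by omega)
      rw [show 1 + (m - 1) = m by omega, show l - (m - 1) = l + 1 - m by omega] at this
      omega
    · rw [if_neg hml] at h1
      omega

/-- The word agreeing with `d` before position `k` and with zeros from there on. -/
def trunc (k : ℕ) (d : ℕ → Fin b) : ℕ → Fin b := fun i => if i < k then d i else 0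

theorem trunc_mem_words {ω : ℕ → Fin m → Fin b} {n k : ℕ} {d : ℕ → Fin b}
    (hd : ∀ t, t + m ≤ n → (fun j : Fin m => d (t + j.1)) ≠ ω t) (hk : k ≤ n) :
    trunc k d ∈ words ω k := by
  refine mem_words.2 ⟨fun i hi => by simp [trunc, not_lt.2 hi], fun t ht h => ?_⟩
  refine hd t (by omega) ?_
  rw [← h]
  funext j
  have := j.2
  simp [trunc, show t + j.1 < k by omega]

/-- Every admissible word extends to an infinite admissible sequence: from position `n` on, each
new letter is chosen different from the last letter of the window that it completes. -/
theorem exists_extension (hb : 3 ≤ b) (hm : 2 ≤ m) (ω : ℕ → Fin m → Fin b) {n : ℕ}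
    {d : ℕ → Fin b} (hd : d ∈ words ω n) :
    ∃ e : ℕ → Fin b, (∀ k, (fun j : Fin m => e (k + j.1)) ≠ ω k) ∧ trunc n e = d := by
  have : Nontrivial (Fin b) := Fin.nontrivial_iff_two_le.2 (by omega)
  choose f hf using fun a : Fin b => exists_ne a
  rw [mem_words] at hd
  refine ⟨fun t => if t < n then d t else f (ω (t + 1 - m) ⟨m - 1, by omega⟩), ?_, ?_⟩
  · intro k h
    by_cases hk : k + m ≤ n
    · refine hd.2 k hk ?_
      rw [← h]
      funext j
      have := j.2
      simp [show k + j.1 < n by omega]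
    · have := congrFun h ⟨m - 1, by omega⟩
      simp only [show ¬ (k + (m - 1) < n) by omega, if_false,
        show k + (m - 1) + 1 - m = k by omega] at this
      exact hf _ this
  · funext t
    by_cases ht : t < n
    · simp [trunc, ht]
    · simp [trunc, ht, hd.1 t (not_lt.1 ht)]

/-- Every admissible word of length `k` has at least a third as many extensions by `l` letters as
there are words avoiding only the windows inside those `l` positions. -/
theorem card_words_le_three_mul (hb : 3 ≤ b) (hm : 2 ≤ m) (ω : ℕ → Fin m → Fin b) (k l : ℕ)
    {w : ℕ → Fin b} (hw : w ∈ words ω k) :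
    (words (shiftBy k ω) l).card ≤
      3 * ((words ω (k + l)).filter (fun d => trunc k d = w)).card := by
  let cat : (ℕ → Fin b) → ℕ → Fin b := fun e t => if t < k then w t else e (t - k)
  have hsh : ∀ e, shiftBy k (cat e) = e := by
    intro e; funext t; simp [shiftBy, cat]
  have hinj : Function.Injective cat := by
    intro x y h
    rw [← hsh x, ← hsh y, h]
  set X := (words (shiftBy k ω) l).image cat with hX
  have hXc : X.card = (words (shiftBy k ω) l).card := Finset.card_image_of_injective _ hinj
  have hXm : ∀ d ∈ X, shiftBy k d ∈ words (shiftBy k ω) l ∧ ∀ t < k, d t = w t := by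
    intro d hd
    obtain ⟨x, hx, rfl⟩ := Finset.mem_image.1 hd
    rw [hsh]
    exact ⟨hx, fun t ht => by simp [cat, ht]⟩
  rw [mem_words] at hw
  set E := (words ω (k + l)).filter (fun d => trunc k d = w) with hE
  -- `a i` counts the continuations from position `k + i` on. Prescribing a window that straddles
  -- position `k` and ends just before position `k + i + 1` leaves at most `a (i + 1)` words, and
  -- `w` determines the part of that window before `k`.
  set a : ℕ → ℕ := fun i => (words (shiftBy (k + i) ω) (l - i)).card with ha
  let p : ℕ → ℕ → Fin b := fun i t => if t < k then w t else
    if h : t - (k + i + 1 - m) < m then ω (k + i + 1 - m) ⟨t - (k + i + 1 - m), h⟩ else 0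
  let B : ℕ → Finset (ℕ → Fin b) := fun i => X.filter (fun d => ∀ t < k + i + 1, d t = p i t)
  have hB : ∀ i < l, (B i).card ≤ a (i + 1) := by
    intro i hi
    apply card_le_of_prefix _ (k + i + 1) (p i)
    intro d hd
    rw [Finset.mem_filter] at hd
    refine ⟨?_, hd.2⟩
    have := shiftBy_mem_words (hXm d hd.1).1 (i := i + 1) (by omega)
    rwa [shiftBy_shiftBy, shiftBy_shiftBy] at this
  have hcover : X ⊆ E ∪ (Finset.range l).biUnion B := by
    intro d hd
    obtain ⟨h1, h2⟩ := hXm d hd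
    rw [mem_words] at h1
    rw [Finset.mem_union, or_iff_not_imp_left]
    intro hdE
    have hz : ∀ i, k + l ≤ i → d i = 0 := by
      intro i hi
      have := h1.1 (i - k) (by omega)
      simpa [shiftBy, show k + (i - k) = i by omega] using this
    have htr : trunc k d = w := by
      funext t
      by_cases ht : t < k
      · simp [trunc, ht, h2 t ht]
      · simp [trunc, ht, hw.1 t (not_lt.1 ht)]
    have : ∃ j, j + m ≤ k + l ∧ (fun s : Fin m => d (j + s.1)) = ω j := by
      by_contra! hcon
      exact hdE (Finset.mem_filter.2 ⟨mem_words.2 ⟨hz, hcon⟩, htr⟩)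
    obtain ⟨j, hj, hjω⟩ := this
    have hjk : j < k := by
      by_contra hjk
      refine h1.2 (j - k) (by omega) ?_
      rw [show shiftBy k ω (j - k) = ω j by simp [shiftBy, show k + (j - k) = j by omega], ← hjω]
      funext s
      simp [shiftBy, show k + (j - k + s.1) = j + s.1 by omega]
    have hjm : k < j + m := by
      by_contra hjm
      refine hw.2 j (by omega) ?_
      rw [← hjω]
      funext s
      have := s.2
      exact (h2 _ (by omega)).symm
    refine Finset.mem_biUnion.2 ⟨j + m - k - 1, Finset.mem_range.2 (by omega),
      Finset.mem_filter.2 ⟨hd, fun t ht => ?_⟩⟩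
    by_cases htk : t < k
    · simp [p, htk, h2 t htk]
    · have e1 : k + (j + m - k - 1) + 1 - m = j := by omega
      have e2 := congrFun hjω ⟨t - j, by omega⟩
      simp only [show j + (t - j) = t by omega] at e2
      simp only [p, htk, if_false, e1, show t - j < m by omega, dif_pos, e2]
  -- The terms decay by a factor `2/5`, so the sum of all the later ones is at most `(2/3) a 0`.
  have hgeom : ∀ j ≤ l, 3 * ∑ i ∈ Finset.range j, a (i + 1) + 2 * a j ≤ 2 * a 0 := by
    intro j
    induction j with
    | zero => simp
    | succ j ih =>
      intro hj
      have h5 := five_mul_card_le hb hm (l - (j + 1)) (shiftBy (k + j) ω)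
      rw [shiftBy_shiftBy, show l - (j + 1) + 1 = l - j by omega] at h5
      change 5 * a (j + 1) ≤ 2 * a j at h5
      have := ih (by omega)
      rw [Finset.sum_range_succ]
      omega
  have h1 : X.card ≤ E.card + ∑ i ∈ Finset.range l, a (i + 1) :=
    calc X.card ≤ (E ∪ (Finset.range l).biUnion B).card := Finset.card_le_card hcover
      _ ≤ E.card + ((Finset.range l).biUnion B).card := Finset.card_union_le _ _
      _ ≤ E.card + ∑ i ∈ Finset.range l, (B i).card := by gcongr; exact Finset.card_biUnion_le
      _ ≤ _ := by gcongr with i hi; exact hB i (Finset.mem_range.1 hi)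
  have h2 := hgeom l le_rfl
  have h3 : a 0 = X.card := by rw [hXc]; simp [ha]
  rw [← hXc]
  omega

theorem card_fiber_le (ω : ℕ → Fin m → Fin b) (k l : ℕ) (w : ℕ → Fin b) :
    ((words ω (k + l)).filter (fun d => trunc k d = w)).card ≤ (words (shiftBy k ω) l).card := by
  apply card_le_of_prefix _ k w
  intro d hd
  rw [Finset.mem_filter] at hd
  refine ⟨by simpa using shiftBy_mem_words hd.1 (i := k) (by omega), fun j hj => ?_⟩
  rw [← hd.2]
  simp [trunc, hj]

theorem trunc_mapsTo (ω : ℕ → Fin m → Fin b) (k l : ℕ) :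
    ∀ d ∈ words ω (k + l), trunc k d ∈ words ω k := fun _ hd =>
  trunc_mem_words (mem_words.1 hd).2 (by omega)

/-- All cylinders of level `k` carry comparable numbers of admissible words: none contains more
than three times the average. -/
theorem card_fiber_mul_le (hb : 3 ≤ b) (hm : 2 ≤ m) (ω : ℕ → Fin m → Fin b) (k l : ℕ)
    (w : ℕ → Fin b) :
    ((words ω (k + l)).filter (fun d => trunc k d = w)).card * (words ω k).card ≤
      3 * (words ω (k + l)).card := by
  calc _ ≤ (words (shiftBy k ω) l).card * (words ω k).card :=
        Nat.mul_le_mul_right _ (card_fiber_le ω k l w)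
    _ = ∑ v ∈ words ω k, (words (shiftBy k ω) l).card := by simp [mul_comm]
    _ ≤ ∑ v ∈ words ω k, 3 * ((words ω (k + l)).filter (fun d => trunc k d = v)).card :=
        Finset.sum_le_sum fun v hv => card_words_le_three_mul hb hm ω k l hv
    _ = _ := by
        rw [← Finset.mul_sum, Finset.card_eq_sum_card_fiberwise (trunc_mapsTo ω k l)]

theorem card_words_le_pow (ω : ℕ → Fin m → Fin b) (n : ℕ) : (words ω n).card ≤ b ^ n := by
  have := Finset.card_le_card_of_injOn (s := words ω n) (t := (Finset.univ : Finset (Fin n → Fin b)))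
    (fun d i => d i) (fun _ _ => Finset.mem_coe.2 (Finset.mem_univ _)) ?_
  · simpa using this
  · intro d hd e he h
    funext i
    by_cases hi : i < n
    · exact congrFun h ⟨i, hi⟩
    · rw [(mem_words.1 hd).1 i (by omega), (mem_words.1 he).1 i (by omega)]

theorem card_words_add_le (ω : ℕ → Fin m → Fin b) (k l : ℕ) :
    (words ω (k + l)).card ≤ b ^ l * (words ω k).card :=
  Finset.card_le_mul_card_image_of_maps_to (trunc_mapsTo ω k l) _ fun w _ =>
    (card_fiber_le ω k l w).trans (card_words_le_pow _ _)

theorem card_words_le_add (hb : 3 ≤ b) (hm : 2 ≤ m) (ω : ℕ → Fin m → Fin b) (k l : ℕ) :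
    (words ω k).card ≤ (words ω (k + l)).card := by
  refine (Finset.card_le_card ?_).trans (Finset.card_image_le (f := trunc k))
  intro d hd
  obtain ⟨e, he, rfl⟩ := exists_extension hb hm ω hd
  refine Finset.mem_image.2 ⟨trunc (k + l) e, trunc_mem_words (n := k + l) (fun t _ => he t) le_rfl,
    ?_⟩
  funext t
  by_cases ht : t < k <;> simp [trunc, ht]
  omega

theorem card_words_pos (hb : 3 ≤ b) (hm : 2 ≤ m) (ω : ℕ → Fin m → Fin b) (n : ℕ) :
    0 < (words ω n).card := by
  have h0 : (0 : ℕ → Fin b) ∈ words ω 0 :=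
    mem_words.2 ⟨fun _ _ => rfl, fun k hk => by omega⟩
  obtain ⟨e, he, -⟩ := exists_extension hb hm ω h0
  exact Finset.card_pos.2 ⟨trunc n e, trunc_mem_words (n := n) (fun t _ => he t) le_rfl⟩

theorem card_SigmaSet (ω : ℕ → Fin m → Fin b) (n : ℕ) :
    Nat.card (SigmaSet b m ω n) = (words ω n).card := by
  rw [← Nat.card_eq_finsetCard]
  refine Nat.card_congr ⟨fun d => ⟨fun t => if h : t < n then d.1 ⟨t, h⟩ else 0, ?_⟩,
    fun e => ⟨fun i => e.1 i, ?_⟩, ?_, ?_⟩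
  · refine mem_words.2 ⟨fun i hi => by simp [not_lt.2 hi], fun k hk h => d.2 k hk ?_⟩
    rw [← h]
    funext j
    have := j.2
    simp [show k + j.1 < n by omega]
  · exact fun k hk h => (mem_words.1 e.2).2 k hk h
  · intro d
    ext i
    simp
  · intro e
    apply Subtype.ext
    funext t
    by_cases ht : t < n
    · simp [ht]
    · simp [ht, (mem_words.1 e.2).1 t (not_lt.1 ht)]

end Words

/-! ### Products of adjacency matrices -/

section Matrices

variable {b m : ℕ}

theorem prodA_succ (ω : ℕ → Fin m → Fin b) (n : ℕ) :
    prodA b m ω (n + 1) = prodA b m ω n * adjMat b m (ω n) := by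
  simp [prodA, List.range_succ]

theorem prodA_nonneg (ω : ℕ → Fin m → Fin b) (n : ℕ) : ∀ u v, 0 ≤ prodA b m ω n u v := by
  induction n with
  | zero =>
    intro u v
    simp only [prodA, List.range_zero, List.map_nil, List.prod_nil, Matrix.one_apply]
    split_ifs <;> norm_num
  | succ n ih =>
    intro u v
    rw [prodA_succ, Matrix.mul_apply]
    refine Finset.sum_nonneg fun x _ => mul_nonneg (ih u x) ?_
    unfold adjMat
    split_ifs <;> norm_num

variable [NeZero b]

open scoped Classical

/-- Appending one letter: the admissible words whose last `m` letters are those of the edge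
`x → v` correspond to the admissible words ending in `x`, provided that the edge is allowed. -/
theorem card_words_edge (hm : 2 ≤ m) (ω : ℕ → Fin m → Fin b) (n : ℕ)
    (x v : Fin (m - 1) → Fin b) :
    (((words ω (n + 1 + (m - 1))).filter (fun d => (fun j : Fin (m - 1) => d (n + 1 + j.1)) = v ∧
        (fun j : Fin (m - 1) => d (n + j.1)) = x)).card : ℝ) =
      ((words ω (n + (m - 1))).filter (fun d => (fun j : Fin (m - 1) => d (n + j.1)) = x)).card *
        adjMat b m (ω n) x v := by
  unfold adjMat
  split_ifs with hC
  · rw [mul_one]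
    norm_cast
    obtain ⟨hC1, hC2⟩ := hC
    apply Finset.card_nbij' (trunc (n + (m - 1)))
      (fun d t => if t = n + (m - 1) then v ⟨m - 2, by omega⟩ else d t)
    · intro d hd
      obtain ⟨hd, -, h2⟩ := Finset.mem_filter.1 hd
      refine Finset.mem_coe.2 (Finset.mem_filter.2
        ⟨trunc_mem_words (mem_words.1 hd).2 (by omega), ?_⟩)
      rw [← h2]
      funext j
      simp [trunc, j.2]
    · intro d hd
      obtain ⟨hd, h2⟩ := Finset.mem_filter.1 hd
      rw [mem_words] at hd
      have hx : ∀ j (hj : j < m - 1), d (n + j) = x ⟨j, hj⟩ := fun j hj => congrFun h2 ⟨j, hj⟩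
      refine Finset.mem_coe.2 (Finset.mem_filter.2 ⟨mem_words.2 ⟨fun i hi => ?_, fun k hk h => ?_⟩,
        ?_, ?_⟩)
      · simp only
        rw [if_neg (by omega)]
        exact hd.1 i (by omega)
      · by_cases hkn : k + m ≤ n + (m - 1)
        · refine hd.2 k hkn ?_
          rw [← h]
          funext j
          have := j.2
          simp only
          rw [if_neg (by omega)]
        · obtain rfl : k = n := by omega
          refine hC2 ⟨fun j hj => ?_, fun h2 => ?_⟩
          · have := congrFun h ⟨j, by omega⟩
            simp only at this
            rw [if_neg (by omega), hx j hj] at this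
            exact this
          · have := congrFun h ⟨m - 1, by omega⟩
            simpa using this
      · funext j
        have hj2 := j.2
        by_cases hj : j.1 + 1 < m - 1
        · simp only
          rw [if_neg (by omega), show n + 1 + j.1 = n + (j.1 + 1) by omega, hx _ hj, hC1 _ hj]
        · simp only
          rw [if_pos (by omega)]
          congr 1
          ext
          simp only
          omega
      · funext j
        have := j.2
        simp only
        rw [if_neg (by omega), hx]
    · intro d hd
      obtain ⟨hd, h1, h2⟩ := Finset.mem_filter.1 hd
      rw [mem_words] at hd
      funext t
      rcases lt_trichotomy t (n + (m - 1)) with ht | ht | ht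
      · simp [trunc, ht, ht.ne]
      · simp only [ht, if_true, ← h1]
        congr 1
        omega
      · simp [trunc, ht.ne', not_lt.2 ht.le, hd.1 t (by omega)]
    · intro d hd
      obtain ⟨hd, -⟩ := Finset.mem_filter.1 hd
      rw [mem_words] at hd
      funext t
      by_cases ht : t < n + (m - 1)
      · simp [trunc, ht, ht.ne]
      · simp [trunc, ht, hd.1 t (by omega)]
  · rw [mul_zero, Nat.cast_eq_zero, Finset.card_eq_zero, Finset.filter_eq_empty_iff]
    rintro d hd ⟨h1, h2⟩
    refine hC ⟨fun i hi => ?_, fun ⟨h3, h4⟩ => ?_⟩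
    · rw [← h1, ← h2]
      simp only
      congr 1
      omega
    · refine (mem_words.1 hd).2 n (by omega) ?_
      funext j
      by_cases hj : j.1 < m - 1
      · have := h3 j.1 hj
        rw [← h2] at this
        exact this
      · have := h4 (by omega)
        rw [← h1] at this
        simp only at this
        have hj2 := j.2
        rw [show n + j.1 = n + 1 + (m - 2) by omega, this]
        congr 1
        ext
        simp only
        omega

/-- A column sum of the product counts the admissible words with a given end. -/
theorem colSum_prodA (hm : 2 ≤ m) (ω : ℕ → Fin m → Fin b) (n : ℕ) :
    ∀ v, ∑ u, prodA b m ω n u v =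
      ((words ω (n + (m - 1))).filter (fun d => (fun j : Fin (m - 1) => d (n + j.1)) = v)).card := by
  induction n with
  | zero =>
    intro v
    have h1 : (words ω (0 + (m - 1))).filter
        (fun d => (fun j : Fin (m - 1) => d (0 + j.1)) = v) =
        {fun t => if h : t < m - 1 then v ⟨t, h⟩ else 0} := by
      ext d
      simp only [Finset.mem_filter, Finset.mem_singleton, mem_words]
      constructor
      · rintro ⟨⟨h1, -⟩, rfl⟩
        funext t
        by_cases ht : t < m - 1
        · simp [ht]
        · simp [ht, h1 t (by omega)]
      · rintro rfl
        refine ⟨⟨fun i hi => by simp [show ¬ i < m - 1 by omega], fun k hk => by omega⟩, ?_⟩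
        funext j
        simp
    rw [h1]
    simp [prodA, Matrix.one_apply]
  | succ n ih =>
    intro v
    simp only [prodA_succ, Matrix.mul_apply]
    rw [Finset.sum_comm, Finset.card_eq_sum_card_fiberwise (t := Finset.univ)
      (f := fun d => fun j : Fin (m - 1) => d (n + j.1))
      (fun _ _ => Finset.mem_coe.2 (Finset.mem_univ _))]
    push_cast
    refine Finset.sum_congr rfl fun x _ => ?_
    rw [← Finset.sum_mul, ih x, Finset.filter_filter, card_words_edge hm]

theorem matNorm_prodA (hm : 2 ≤ m) (ω : ℕ → Fin m → Fin b) (n : ℕ) :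
    matNorm (prodA b m ω n) = (words ω (n + (m - 1))).card := by
  have h : matNorm (prodA b m ω n) = ∑ v, ∑ u, prodA b m ω n u v := by
    refine Eq.trans Finset.sum_comm ?_
    exact Finset.sum_congr rfl fun v _ => Finset.sum_congr rfl fun u _ =>
      abs_of_nonneg (prodA_nonneg ω n u v)
  rw [h, Finset.card_eq_sum_card_fiberwise (t := Finset.univ)
    (f := fun d => fun j : Fin (m - 1) => d (n + j.1))
    (fun _ _ => Finset.mem_coe.2 (Finset.mem_univ _))]
  push_cast
  exact Finset.sum_congr rfl fun v _ => colSum_prodA hm ω n v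

end Matrices

/-! ### The growth exponent -/

section Exponent

variable {b m : ℕ} [NeZero b]

omit [NeZero b] in
theorem div_mul_log_mem_Icc (hb : 3 ≤ b) {c n : ℕ} (hc : 0 < c) (hcn : c ≤ b ^ n) :
    0 ≤ Real.log c / (n * Real.log b) ∧ Real.log c / (n * Real.log b) ≤ 1 := by
  have hlog : 0 < Real.log b := Real.log_pos (by norm_cast; omega)
  have hc1 : (1 : ℝ) ≤ c := by exact_mod_cast hc
  refine ⟨div_nonneg (Real.log_nonneg hc1) (by positivity), div_le_one_of_le₀ ?_ (by positivity)⟩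
  rw [← Real.log_pow]
  exact Real.log_le_log (by linarith) (by exact_mod_cast hcn)

/-- The exponent `log |Σ_n^ω| / (n log b)` whose lower limit is the dimension; its value at `n = 0`
is the junk value `0`. -/
noncomputable def growth (ω : ℕ → Fin m → Fin b) (n : ℕ) : ℝ :=
  Real.log (words ω n).card / (n * Real.log b)

theorem growth_mem_Icc (hb : 3 ≤ b) (hm : 2 ≤ m) (ω : ℕ → Fin m → Fin b) (n : ℕ) :
    0 ≤ growth ω n ∧ growth ω n ≤ 1 :=
  div_mul_log_mem_Icc hb (card_words_pos hb hm ω n) (card_words_le_pow ω n)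

theorem growth_isBoundedUnder (hb : 3 ≤ b) (hm : 2 ≤ m) (ω : ℕ → Fin m → Fin b) :
    IsBoundedUnder (· ≥ ·) atTop (growth ω) :=
  isBoundedUnder_of ⟨0, fun n => (growth_mem_Icc hb hm ω n).1⟩

theorem growth_isCoboundedUnder (hb : 3 ≤ b) (hm : 2 ≤ m) (ω : ℕ → Fin m → Fin b) :
    IsCoboundedUnder (· ≥ ·) atTop (growth ω) :=
  (isBoundedUnder_of ⟨1, fun n => (growth_mem_Icc hb hm ω n).2⟩ :
    IsBoundedUnder (· ≤ ·) atTop (growth ω)).isCoboundedUnder_ge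

theorem growth_lt_iff (hb : 3 ≤ b) (hm : 2 ≤ m) (ω : ℕ → Fin m → Fin b) {n : ℕ} (hn : 0 < n)
    (s : ℝ) : growth ω n < s ↔ ((words ω n).card : ℝ) < (b : ℝ) ^ (n * s) := by
  have hlog : 0 < Real.log b := Real.log_pos (by norm_cast; omega)
  have hb0 : (0 : ℝ) < b := by norm_cast; omega
  have hc : (0 : ℝ) < (words ω n).card := by exact_mod_cast card_words_pos hb hm ω n
  have hn' : (0 : ℝ) < n := by exact_mod_cast hn
  rw [growth, div_lt_iff₀ (by positivity), Real.log_lt_iff_lt_exp hc, Real.rpow_def_of_pos hb0]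
  ring_nf

/-- Lengthening the words by a fixed amount `q` does not change the lower growth exponent, since
it multiplies the number of words by at most `b ^ q`. -/
theorem liminf_shift (hb : 3 ≤ b) (hm : 2 ≤ m) (ω : ℕ → Fin m → Fin b) (q : ℕ) :
    liminf (growth ω) atTop =
      liminf (fun n : ℕ => Real.log (words ω (n + q)).card / (n * Real.log b)) atTop := by
  have hlog : 0 < Real.log b := Real.log_pos (by norm_cast; omega)
  have hb0 : (0 : ℝ) < b := by norm_cast; omega
  set g : ℕ → ℝ := fun n : ℕ => Real.log (words ω (n + q)).card / (n * Real.log b) with hg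
  have hle : ∀ n, growth ω n ≤ g n := by
    intro n
    have h1 : (0 : ℝ) < (words ω n).card := by exact_mod_cast card_words_pos hb hm ω n
    have h2 : ((words ω n).card : ℝ) ≤ (words ω (n + q)).card := by
      exact_mod_cast card_words_le_add hb hm ω n q
    simp only [growth, hg]
    gcongr
  have hub : ∀ ε : ℝ, 0 < ε → ∀ᶠ n : ℕ in atTop, g n ≤ growth ω n + ε := by
    intro ε hε
    obtain ⟨M, hM⟩ := exists_nat_gt (q / ε)
    filter_upwards [eventually_ge_atTop (max M 1)] with n hn
    have hn1 : (0 : ℝ) < n := by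
      have : 0 < n := by omega
      exact_mod_cast this
    have hnM : (M : ℝ) ≤ n := by exact_mod_cast (le_max_left _ _).trans hn
    have h1 : (0 : ℝ) < (words ω n).card := by exact_mod_cast card_words_pos hb hm ω n
    have h1' : (0 : ℝ) < (words ω (n + q)).card := by
      exact_mod_cast card_words_pos hb hm ω (n + q)
    have h2 : ((words ω (n + q)).card : ℝ) ≤ b ^ q * (words ω n).card := by
      exact_mod_cast card_words_add_le ω n q
    have h3 : Real.log (words ω (n + q)).card ≤ q * Real.log b + Real.log (words ω n).card := by
      rw [← Real.log_pow, ← Real.log_mul (by positivity) h1.ne']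
      exact Real.log_le_log h1' h2
    have h4 : (q : ℝ) ≤ ε * n := by
      rw [div_lt_iff₀ hε] at hM
      nlinarith
    simp only [growth, hg]
    rw [div_add' _ _ _ (by positivity)]
    gcongr
    nlinarith
  have hgb : IsBoundedUnder (· ≥ ·) atTop g :=
    isBoundedUnder_of ⟨0, fun n => (growth_mem_Icc hb hm ω n).1.trans (hle n)⟩
  have hgc : IsCoboundedUnder (· ≥ ·) atTop g := by
    have : IsBoundedUnder (· ≤ ·) atTop g := by
      refine ⟨2, ?_⟩
      rw [eventually_map]
      filter_upwards [hub 1 one_pos] with n hn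
      linarith [(growth_mem_Icc hb hm ω n).2]
    exact this.isCoboundedUnder_ge
  refine le_antisymm (liminf_le_liminf (Eventually.of_forall hle)
    (growth_isBoundedUnder hb hm ω) hgc) (le_of_forall_pos_le_add fun ε hε => ?_)
  rw [← liminf_add_const atTop (growth ω) ε (growth_isCoboundedUnder hb hm ω)
    (growth_isBoundedUnder hb hm ω)]
  refine liminf_le_liminf (hub ε hε) hgb ?_
  have : IsBoundedUnder (· ≤ ·) atTop (fun n => growth ω n + ε) :=
    isBoundedUnder_of ⟨1 + ε, fun n => by linarith [(growth_mem_Icc hb hm ω n).2]⟩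
  exact this.isCoboundedUnder_ge

end Exponent

/-! ### Hausdorff dimension -/

section Dimension

variable {b m : ℕ} [NeZero b]

/-- The infinite admissible sequences, i.e. the digit sequences of the points of `K^ω`. -/
def survivors (ω : ℕ → Fin m → Fin b) : Set (ℕ → Fin b) :=
  {d | ∀ k, (fun j : Fin m => d (k + j.1)) ≠ ω k}

omit [NeZero b] in
theorem Kset_eq_image (ω : ℕ → Fin m → Fin b) : Kset b m ω = Real.ofDigits '' survivors ω := by
  ext x
  simp only [Kset, survivors, Set.mem_ofPred_eq, Set.mem_image, Real.ofDigits, Real.ofDigitsTerm,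
    div_eq_mul_inv, eq_comm (a := x)]

theorem isCompact_Kset (ω : ℕ → Fin m → Fin b) : IsCompact (Kset b m ω) := by
  rw [Kset_eq_image]
  refine IsCompact.image (IsClosed.isCompact ?_) Real.continuous_ofDigits
  have : survivors ω = ⋂ k, {d : ℕ → Fin b | (fun j : Fin m => d (k + j.1)) = ω k}ᶜ := by
    ext d
    simp [survivors]
  rw [this]
  refine isClosed_iInter fun k => IsOpen.isClosed_compl ?_
  exact (isOpen_discrete {ω k}).preimage (by fun_prop)

/-- The upper bound: the cylinders of level `n` cover the survivor set by `|Σ_n^ω|` sets of diameter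
at most `b ^ (-n)`. -/
theorem dimH_Kset_le (hb : 3 ≤ b) (hm : 2 ≤ m) (ω : ℕ → Fin m → Fin b) :
    dimH (Kset b m ω) ≤ ENNReal.ofReal (liminf (growth ω) atTop) := by
  have hb0 : (0 : ℝ) < b := by norm_cast; omega
  refine dimH_le fun s hs => ?_
  by_contra! hlt
  have hL : liminf (growth ω) atTop < s := by
    by_contra! h
    have := ENNReal.ofReal_le_ofReal h
    rw [ENNReal.ofReal_coe_nnreal] at this
    exact absurd hlt (not_lt.2 this)
  have hfreq := frequently_lt_of_liminf_lt (growth_isCoboundedUnder hb hm ω) hL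
  let t : ∀ n : ℕ, words ω n → Set ℝ := fun n w =>
    {x | ∃ d ∈ survivors ω, trunc n d = w.1 ∧ Real.ofDigits d = x}
  let r : ℕ → ENNReal := fun n => ENNReal.ofReal ((b : ℝ) ^ n)⁻¹
  have hr : Tendsto r atTop (nhds 0) := by
    rw [← ENNReal.ofReal_zero]
    refine ENNReal.tendsto_ofReal (tendsto_inv_atTop_zero.comp
      (tendsto_pow_atTop_atTop_of_one_lt ?_))
    norm_cast
    omega
  have ht : ∀ n, ∀ w, Metric.ediam (t n w) ≤ r n := by
    intro n w
    refine Metric.ediam_le ?_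
    rintro _ ⟨d, -, hd, rfl⟩ _ ⟨e, -, he, rfl⟩
    rw [edist_dist, Real.dist_eq]
    refine ENNReal.ofReal_le_ofReal (Real.abs_ofDigits_sub_ofDigits_le fun i hi => ?_)
    have := congrFun (hd.trans he.symm) i
    simpa [trunc, hi] using this
  have hst : ∀ n, Kset b m ω ⊆ ⋃ w, t n w := by
    intro n x hx
    rw [Kset_eq_image] at hx
    obtain ⟨d, hd, rfl⟩ := hx
    exact Set.mem_iUnion.2 ⟨⟨trunc n d, trunc_mem_words (n := n) (fun k _ => hd k) le_rfl⟩,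
      d, hd, rfl, rfl⟩
  have hle := Measure.hausdorffMeasure_le_liminf_sum (s : ℝ) (Kset b m ω) r hr t
    (Eventually.of_forall ht) (Eventually.of_forall hst)
  rw [hs] at hle
  have h1 : liminf (fun n => ∑ w, Metric.ediam (t n w) ^ (s : ℝ)) atTop ≤ 1 := by
    refine liminf_le_of_frequently_le' ((hfreq.and_eventually (eventually_gt_atTop 0)).mono ?_)
    rintro n ⟨hn, hn0⟩
    rw [growth_lt_iff hb hm ω hn0] at hn
    calc ∑ w, Metric.ediam (t n w) ^ (s : ℝ) ≤ ∑ w : words ω n, r n ^ (s : ℝ) := by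
          gcongr with w; exact ht n w
      _ = ENNReal.ofReal ((words ω n).card * (((b : ℝ) ^ n)⁻¹) ^ (s : ℝ)) := by
          have h2 : r n ^ (s : ℝ) = ENNReal.ofReal ((((b : ℝ) ^ n)⁻¹) ^ (s : ℝ)) :=
            ENNReal.ofReal_rpow_of_nonneg (by positivity) s.coe_nonneg
          rw [ENNReal.ofReal_mul (by positivity), ← h2]
          simp
      _ ≤ 1 := by
          rw [ENNReal.ofReal_le_one, Real.inv_rpow (by positivity), ← Real.rpow_natCast,
            ← Real.rpow_mul hb0.le]
          rw [← div_eq_mul_inv]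
          exact div_le_one_of_le₀ hn.le (by positivity)
  exact absurd (hle.trans h1) (by simp)

/-- A compact null set for `μH[s]` has a finite cover by balls for which the sum of the `s`-th
powers of the radii is arbitrarily small. -/
theorem exists_finite_ball_cover {K : Set ℝ} (hK : IsCompact K) {s : ℝ} (hs : 0 < s)
    (h : Measure.hausdorffMeasure s K = 0) {δ : ℝ} (hδ : 0 < δ) :
    ∃ (I : Finset ℕ) (x ρ : ℕ → ℝ), (∀ n, 0 < ρ n) ∧
      (K ⊆ ⋃ n ∈ I, Metric.ball (x n) (ρ n)) ∧ ∑ n ∈ I, ρ n ^ s ≤ δ := by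
  classical
  rw [Measure.hausdorffMeasure_apply] at h
  have h1 := (ENNReal.iSup_eq_zero.1 (ENNReal.iSup_eq_zero.1 h 1)) one_pos
  have hpos : 0 < ENNReal.ofReal (δ / 2) := by simpa using hδ
  rw [← h1] at hpos
  simp only [iInf_lt_iff] at hpos
  obtain ⟨t, htK, -, hsum⟩ := hpos
  set g : ℕ → ENNReal := fun n => ⨆ _ : (t n).Nonempty, Metric.ediam (t n) ^ s with hg
  have hgtop : ∀ n, g n ≠ ⊤ := ENNReal.ne_top_of_tsum_ne_top (hsum.trans ENNReal.ofReal_lt_top).ne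
  obtain ⟨η, hη0, c, hηc, hc⟩ := NNReal.exists_pos_sum_of_countable
    (ε := ⟨δ / 2, by positivity⟩) (fun h0 => (half_pos hδ).ne' (congrArg NNReal.toReal h0)) ℕ
  -- The summand `η n` makes room for sets of diameter zero.
  set ρ : ℕ → ℝ := fun n => ((g n).toReal + η n) ^ s⁻¹ with hρ
  have hbase : ∀ n, 0 < (g n).toReal + η n := fun n =>
    add_pos_of_nonneg_of_pos ENNReal.toReal_nonneg (hη0 n)
  have hρ0 : ∀ n, 0 < ρ n := fun n => Real.rpow_pos_of_pos (hbase n) _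
  have hρs : ∀ n, ρ n ^ s = (g n).toReal + η n := fun n =>
    Real.rpow_inv_rpow (hbase n).le hs.ne'
  let x : ℕ → ℝ := fun n => if h : (t n).Nonempty then h.some else 0
  have hball : ∀ n, t n ⊆ Metric.ball (x n) (ρ n) := by
    intro n y hy
    have hne : (t n).Nonempty := ⟨y, hy⟩
    have hx : x n ∈ t n := by simp only [x, dif_pos hne]; exact hne.some_mem
    rw [Metric.mem_ball, ← Real.rpow_lt_rpow_iff dist_nonneg (hρ0 n).le hs, hρs]
    have h2 : ENNReal.ofReal (dist y (x n) ^ s) ≤ g n := by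
      simp only [hg, hne, iSup_pos]
      rw [← ENNReal.ofReal_rpow_of_nonneg dist_nonneg hs.le, ← edist_dist]
      exact ENNReal.rpow_le_rpow (Metric.edist_le_ediam_of_mem hy hx) hs.le
    have h3 := (ENNReal.ofReal_le_iff_le_toReal (hgtop n)).1 h2
    have := hη0 n
    have : (0 : ℝ) < η n := by exact_mod_cast this
    linarith
  obtain ⟨I, hI⟩ := hK.elim_finite_subcover (fun n => Metric.ball (x n) (ρ n))
    (fun n => Metric.isOpen_ball) (htK.trans (Set.iUnion_mono hball))
  refine ⟨I, x, ρ, hρ0, hI, ?_⟩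
  simp only [hρs, Finset.sum_add_distrib]
  have h4 : ∑ n ∈ I, (g n).toReal ≤ δ / 2 := by
    rw [← ENNReal.toReal_sum fun n _ => hgtop n]
    exact ENNReal.toReal_le_of_le_ofReal (by positivity) ((ENNReal.sum_le_tsum I).trans hsum.le)
  have h5 : ∑ n ∈ I, (η n : ℝ) ≤ δ / 2 := by
    have : ∑ n ∈ I, η n ≤ c := sum_le_hasSum I (fun _ _ => zero_le) hηc
    have h6 := (NNReal.coe_le_coe.2 this).trans (NNReal.coe_lt_coe.2 hc).le
    push_cast at h6
    exact h6
  linarith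

/-- The integer with base-`b` digits `d 0, …, d (k - 1)`, most significant first. -/
def prefixValue (d : ℕ → Fin b) : ℕ → ℤ
  | 0 => 0
  | k + 1 => b * prefixValue d k + (d k : ℕ)

omit [NeZero b] in
theorem eq_of_prefixValue_eq {d e : ℕ → Fin b} (k : ℕ) (h : prefixValue d k = prefixValue e k) :
    ∀ i < k, d i = e i := by
  induction k with
  | zero => intro i hi; omega
  | succ k ih =>
    simp only [prefixValue] at h
    have hd : ((d k : ℕ) : ℤ) < b := by exact_mod_cast (d k).2
    have he : ((e k : ℕ) : ℤ) < b := by exact_mod_cast (e k).2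
    have hmod := congrArg (· % (b : ℤ)) h
    simp only [Int.mul_add_emod_self_left] at hmod
    rw [Int.emod_eq_of_lt (by positivity) hd, Int.emod_eq_of_lt (by positivity) he] at hmod
    have hq : prefixValue d k = prefixValue e k := by
      rw [hmod] at h
      have hb : (b : ℤ) ≠ 0 := by
        have := (d k).2
        omega
      exact mul_left_cancel₀ hb (add_right_cancel h)
    intro i hi
    rcases Nat.lt_succ_iff_lt_or_eq.1 hi with hi | rfl
    · exact ih hq i hi
    · exact Fin.ext (by exact_mod_cast hmod)

theorem prefixValue_bounds (d : ℕ → Fin b) (k : ℕ) :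
    prefixValue d k ≤ (b : ℝ) ^ k * Real.ofDigits d ∧
      (b : ℝ) ^ k * Real.ofDigits d ≤ prefixValue d k + 1 := by
  have hb : (b : ℝ) ≠ 0 := by exact_mod_cast NeZero.ne b
  have hsum : ∀ k, (b : ℝ) ^ k * ∑ i ∈ Finset.range k, Real.ofDigitsTerm d i = prefixValue d k := by
    intro k
    induction k with
    | zero => simp [prefixValue]
    | succ k ih =>
      rw [Finset.sum_range_succ, mul_add, pow_succ', mul_assoc, ih]
      simp only [prefixValue, Real.ofDigitsTerm]
      push_cast
      field_simp
      ring
  have h0 := Real.ofDigits_nonneg fun i => d (i + k)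
  have h1 := Real.ofDigits_le_one fun i => d (i + k)
  rw [Real.ofDigits_eq_sum_add_ofDigits d k, mul_add, hsum, mul_inv_cancel_left₀ (pow_ne_zero _ hb)]
  constructor <;> linarith

open scoped Classical

/-- A ball of radius at most `b ^ (-k)` meets at most three cylinders of level `k`. -/
theorem exists_three_prefixes (ω : ℕ → Fin m → Fin b) (x r : ℝ) (k : ℕ)
    (hr : r ≤ ((b : ℝ)⁻¹) ^ k) :
    ∃ T : Finset (ℕ → Fin b), T.card ≤ 3 ∧
      ∀ d ∈ survivors ω, Real.ofDigits d ∈ Metric.ball x r → trunc k d ∈ T := by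
  have hb : (0 : ℝ) < b := by exact_mod_cast Nat.pos_of_ne_zero (NeZero.ne b)
  set y := (b : ℝ) ^ k * x with hy
  refine ⟨(words ω k).filter (fun w => prefixValue w k ∈ Finset.Icc (⌊y⌋ - 1) (⌊y⌋ + 1)), ?_, ?_⟩
  · have : (Finset.Icc (⌊y⌋ - 1) (⌊y⌋ + 1)).card = 3 := by
      rw [Int.card_Icc]
      omega
    rw [← this]
    refine Finset.card_le_card_of_injOn (fun w => prefixValue w k)
      (fun w hw => (Finset.mem_filter.1 hw).2) ?_
    intro d hd e he h
    have hd := mem_words.1 (Finset.mem_filter.1 hd).1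
    have he := mem_words.1 (Finset.mem_filter.1 he).1
    funext i
    by_cases hi : i < k
    · exact eq_of_prefixValue_eq k h i hi
    · rw [hd.1 i (by omega), he.1 i (by omega)]
  · intro d hd hball
    refine Finset.mem_filter.2 ⟨trunc_mem_words (n := k) (fun t _ => hd t) le_rfl, ?_⟩
    have htr : ∀ j ≤ k, prefixValue (trunc k d) j = prefixValue d j := by
      intro j
      induction j with
      | zero => simp [prefixValue]
      | succ j ih =>
        intro hj
        simp [prefixValue, ih (by omega), trunc, show j < k by omega]
    rw [htr k le_rfl]
    obtain ⟨h1, h2⟩ := prefixValue_bounds d k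
    rw [Metric.mem_ball, Real.dist_eq] at hball
    have h3 : |(b : ℝ) ^ k * Real.ofDigits d - y| < 1 := by
      rw [hy, ← mul_sub, abs_mul, abs_of_pos (by positivity)]
      calc (b : ℝ) ^ k * |Real.ofDigits d - x| < (b : ℝ) ^ k * ((b : ℝ)⁻¹) ^ k := by
            have := hball.trans_le hr
            gcongr
        _ = 1 := by rw [inv_pow, mul_inv_cancel₀ (by positivity)]
    rw [abs_lt] at h3
    have h4 := Int.floor_le y
    have h5 := Int.lt_floor_add_one y
    have h6 : ((⌊y⌋ - 2 : ℤ) : ℝ) < prefixValue d k := by push_cast; linarith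
    have h7 : (prefixValue d k : ℝ) < ((⌊y⌋ + 2 : ℤ) : ℝ) := by push_cast; linarith
    have h6 := Int.cast_lt.1 h6
    have h7 := Int.cast_lt.1 h7
    rw [Finset.mem_Icc]
    omega

/-- If the number of admissible words grows at least like `b ^ (n s)`, then the `s`-dimensional
Hausdorff measure of the survivor set is positive: in an efficient finite cover by balls, each ball
captures too small a proportion of the words of any large common length `N`. -/
theorem hausdorffMeasure_Kset_ne_zero (hb : 3 ≤ b) (hm : 2 ≤ m) (ω : ℕ → Fin m → Fin b)
    {s C : ℝ} (hs : 0 < s) (hC : 0 < C)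
    (hgrow : ∀ n : ℕ, (b : ℝ) ^ (n * s) ≤ C * (words ω n).card) :
    Measure.hausdorffMeasure s (Kset b m ω) ≠ 0 := by
  intro hzero
  have hb1 : (1 : ℝ) < b := by norm_cast; omega
  have hb0 : (0 : ℝ) < b := by linarith
  -- Each ball meets three cylinders, and each of these carries at most three times the average
  -- number of words; the factor `b ^ s` is lost in rounding the radius to a power of `b`.
  set M := 9 * C * (b : ℝ) ^ s with hM
  have hMpos : 0 < M := by positivity
  obtain ⟨I, x, ρ, hρ0, hcover, hsum⟩ := exists_finite_ball_cover (isCompact_Kset ω) hs hzero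
    (δ := min 1 (1 / (2 * M))) (by positivity)
  have hρ1 : ∀ i ∈ I, ρ i ≤ 1 := by
    intro i hi
    have h1 : ρ i ^ s ≤ ∑ n ∈ I, ρ n ^ s :=
      Finset.single_le_sum (f := fun n => ρ n ^ s) (fun n _ => (Real.rpow_pos_of_pos (hρ0 n) s).le) hi
    have h2 := h1.trans (hsum.trans (min_le_left _ _))
    by_contra! h3
    exact absurd (Real.one_lt_rpow h3 hs) (not_lt.2 h2)
  have hk : ∀ i : ℕ, ∃ k : ℕ, i ∈ I → ((b : ℝ)⁻¹) ^ (k + 1) < ρ i ∧ ρ i ≤ ((b : ℝ)⁻¹) ^ k := by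
    intro i
    by_cases hi : i ∈ I
    · obtain ⟨k, hk⟩ := exists_nat_pow_near_of_lt_one (hρ0 i) (hρ1 i hi) (inv_pos.2 hb0)
        (inv_lt_one_of_one_lt₀ hb1)
      exact ⟨k, fun _ => hk⟩
    · exact ⟨0, fun h => absurd h hi⟩
  choose k hk using hk
  have hT : ∀ i : ℕ, ∃ T : Finset (ℕ → Fin b), T.card ≤ 3 ∧ (i ∈ I → ∀ d ∈ survivors ω,
      Real.ofDigits d ∈ Metric.ball (x i) (ρ i) → trunc (k i) d ∈ T) := by
    intro i
    by_cases hi : i ∈ I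
    · obtain ⟨T, hT, hT'⟩ := exists_three_prefixes ω (x i) (ρ i) (k i) (hk i hi).2
      exact ⟨T, hT, fun _ => hT'⟩
    · exact ⟨∅, by simp, fun h => absurd h hi⟩
  choose T hTcard hT using hT
  set N := I.sup k with hN
  have hkN : ∀ i ∈ I, k i ≤ N := fun i hi => Finset.le_sup hi
  have hsub : words ω N ⊆ I.biUnion fun i => (T i).biUnion fun v =>
      (words ω N).filter (fun d => trunc (k i) d = v) := by
    intro w hw
    obtain ⟨e, he, rfl⟩ := exists_extension hb hm ω hw
    have heK : Real.ofDigits e ∈ Kset b m ω := by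
      rw [Kset_eq_image]
      exact ⟨e, he, rfl⟩
    obtain ⟨i, hi, hball⟩ := Set.mem_iUnion₂.1 (hcover heK)
    refine Finset.mem_biUnion.2 ⟨i, hi, Finset.mem_biUnion.2 ⟨_, hT i hi e he hball,
      Finset.mem_filter.2 ⟨hw, ?_⟩⟩⟩
    funext t
    have := hkN i hi
    by_cases ht : t < k i
    · simp [trunc, ht, show t < N by omega]
    · simp [trunc, ht]
  have hfib : ∀ i ∈ I, ∀ v, (((words ω N).filter (fun d => trunc (k i) d = v)).card : ℝ) ≤
      3 * C * (b : ℝ) ^ s * ρ i ^ s * (words ω N).card := by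
    intro i hi v
    have h1 := card_fiber_mul_le hb hm ω (k i) (N - k i) v
    rw [Nat.add_sub_cancel' (hkN i hi)] at h1
    have h1 : (((words ω N).filter (fun d => trunc (k i) d = v)).card : ℝ) *
      (words ω (k i)).card ≤ 3 * (words ω N).card := by exact_mod_cast h1
    set F : ℝ := (((words ω N).filter (fun d => trunc (k i) d = v)).card : ℝ)
    have hF0 : 0 ≤ F := Nat.cast_nonneg _
    have h2 := hgrow (k i)
    have h3 : 1 ≤ (b : ℝ) ^ s * ρ i ^ s * (b : ℝ) ^ (k i * s) := by
      have h4 : 1 ≤ (b : ℝ) ^ (k i + 1) * ρ i := by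
        have := (hk i hi).1.le
        rw [inv_pow] at this
        exact (inv_le_iff_one_le_mul₀' (by positivity)).1 this
      have h5 := Real.one_le_rpow h4 hs.le
      rw [Real.mul_rpow (by positivity) (hρ0 i).le, pow_succ, Real.mul_rpow (by positivity) hb0.le,
        ← Real.rpow_natCast, ← Real.rpow_mul hb0.le] at h5
      linarith
    have h6 : 0 ≤ (b : ℝ) ^ s * ρ i ^ s := by have := hρ0 i; positivity
    calc F ≤ F * ((b : ℝ) ^ s * ρ i ^ s * (b : ℝ) ^ (k i * s)) := le_mul_of_one_le_right hF0 h3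
      _ ≤ F * ((b : ℝ) ^ s * ρ i ^ s * (C * (words ω (k i)).card)) := by gcongr
      _ = (F * (words ω (k i)).card) * (C * ((b : ℝ) ^ s * ρ i ^ s)) := by ring
      _ ≤ (3 * (words ω N).card) * (C * ((b : ℝ) ^ s * ρ i ^ s)) := by gcongr
      _ = _ := by ring
  have hcount : ((words ω N).card : ℝ) ≤ ∑ i ∈ I, M * ρ i ^ s * (words ω N).card := by
    have h1 : (words ω N).card ≤ ∑ i ∈ I, ∑ v ∈ T i,
        ((words ω N).filter (fun d => trunc (k i) d = v)).card :=
      (Finset.card_le_card hsub).trans (Finset.card_biUnion_le.trans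
        (Finset.sum_le_sum fun i _ => Finset.card_biUnion_le))
    have h1 : ((words ω N).card : ℝ) ≤ ∑ i ∈ I, ∑ v ∈ T i,
        (((words ω N).filter (fun d => trunc (k i) d = v)).card : ℝ) := by exact_mod_cast h1
    refine h1.trans (Finset.sum_le_sum fun i hi => ?_)
    refine (Finset.sum_le_sum fun v _ => hfib i hi v).trans ?_
    rw [Finset.sum_const, nsmul_eq_mul]
    have h2 : ((T i).card : ℝ) ≤ 3 := by exact_mod_cast hTcard i
    have h3 : 0 ≤ 3 * C * (b : ℝ) ^ s * ρ i ^ s * (words ω N).card := by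
      have := hρ0 i; positivity
    calc _ ≤ 3 * (3 * C * (b : ℝ) ^ s * ρ i ^ s * (words ω N).card) := by gcongr
      _ = _ := by rw [hM]; ring
  have hpos : (0 : ℝ) < (words ω N).card := by exact_mod_cast card_words_pos hb hm ω N
  rw [← Finset.sum_mul, ← Finset.mul_sum] at hcount
  have h1 : M * ∑ i ∈ I, ρ i ^ s ≤ 1 / 2 := by
    calc M * ∑ i ∈ I, ρ i ^ s ≤ M * (1 / (2 * M)) := by
          gcongr; exact hsum.trans (min_le_right _ _)
      _ = 1 / 2 := by field_simp
  nlinarith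

theorem le_dimH_Kset (hb : 3 ≤ b) (hm : 2 ≤ m) (ω : ℕ → Fin m → Fin b) :
    ENNReal.ofReal (liminf (growth ω) atTop) ≤ dimH (Kset b m ω) := by
  have hb1 : (1 : ℝ) ≤ b := by norm_cast; omega
  have hb0 : (0 : ℝ) < b := by linarith
  refine ENNReal.le_of_forall_nnreal_lt fun s hs => ?_
  rcases eq_or_ne s 0 with rfl | hs0
  · simp
  have hs0 : (0 : ℝ) < s := by exact_mod_cast pos_iff_ne_zero.2 hs0
  have hsL : (s : ℝ) < liminf (growth ω) atTop := by
    by_contra! h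
    have := ENNReal.ofReal_le_ofReal h
    rw [ENNReal.ofReal_coe_nnreal] at this
    exact absurd hs (not_lt.2 this)
  obtain ⟨n₀, hn₀⟩ := eventually_atTop.1
    (eventually_lt_of_lt_liminf hsL (growth_isBoundedUnder hb hm ω))
  refine le_dimH_of_hausdorffMeasure_ne_zero (hausdorffMeasure_Kset_ne_zero hb hm ω hs0
    (C := (b : ℝ) ^ (n₀ * s : ℝ)) (by positivity) fun n => ?_)
  have hc : (1 : ℝ) ≤ (words ω n).card := by exact_mod_cast card_words_pos hb hm ω n
  have hC : 1 ≤ (b : ℝ) ^ (n₀ * s : ℝ) := Real.one_le_rpow hb1 (by positivity)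
  rcases le_total n n₀ with hn | hn
  · have : (b : ℝ) ^ (n * s : ℝ) ≤ (b : ℝ) ^ (n₀ * s : ℝ) := by gcongr
    nlinarith
  · rcases Nat.eq_zero_or_pos n with rfl | hn0
    · simp only [Nat.cast_zero, zero_mul, Real.rpow_zero]
      nlinarith
    · have := not_lt.1 (mt (growth_lt_iff hb hm ω hn0 s).2 (not_lt.2 (hn₀ n hn).le))
      nlinarith

end Dimension

/-- **Theorem 1.1 (Hausdorff-dimension part).**
For every `ω ∈ (D_b^m)^{ℕ₀}`, the Hausdorff dimension of `K^ω` equals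
`liminf_{n→∞} log|Σ_n^ω| / (n log b)`, which also equals
`liminf_{n→∞} log‖A_{ω^0}⋯A_{ω^{n-1}}‖ / (n log b)`. -/
theorem hausdorff_dim_survivor (b m : ℕ) (hb : 3 ≤ b) (hm : 2 ≤ m)
    (ω : ℕ → Fin m → Fin b) :
    dimH (Kset b m ω) =
      ENNReal.ofReal (Filter.liminf (fun n : ℕ =>
        Real.log ((Nat.card ↥(SigmaSet b m ω n) : ℕ) : ℝ) / ((n : ℝ) * Real.log b))
        Filter.atTop) ∧
    Filter.liminf (fun n : ℕ =>
        Real.log ((Nat.card ↥(SigmaSet b m ω n) : ℕ) : ℝ) / ((n : ℝ) * Real.log b))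
      Filter.atTop =
    Filter.liminf (fun n : ℕ =>
        Real.log (matNorm (prodA b m ω n)) / ((n : ℝ) * Real.log b))
      Filter.atTop := by
  have : NeZero b := ⟨by omega⟩
  simp only [card_SigmaSet, matNorm_prodA hm]
  exact ⟨le_antisymm (dimH_Kset_le hb hm ω) (le_dimH_Kset hb hm ω), liminf_shift hb hm ω (m - 1)⟩

end Paper
end

section
/- If ω ∈ (D_b^m)^{ℕ₀} is a progressively overlapping sequence, then the survivor set K^ω is (log λ / log b)-Ahlfors regular, where λ is the unique root in (b−1, b) of x^m − (b−1)(x^{m−1} + x^{m−2} + ⋯ + x + 1) = 0. -/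
/-!
Progressive overlapping forces `ω^k_j = η_{k+j}` for the single sequence `η_n = ω^n_0`
(`window_eq`). A code `d` therefore survives iff it never agrees with `η` on `m` consecutive
positions, that is, iff the run-length `run η d n` (the number of positions just before `n` where
`d` and `η` agree) stays below `m` (`mem_surv_iff`, `Kset_eq`). From run-length `r`, exactly
`b - 1` digits lead to run-length `0` and one leads to `r + 1`. The weights `wt r` form a positive
eigenvector of this transition rule with eigenvalue `λ` (`sum_cw`), normalised by `wt 0 = 1`, which
is the defining equation of `λ`; for `r < m` they lie between `(b - 1) / λ` and `1`. Thus
`λ⁻ⁿ wt (run η d n)` is a consistent mass on the prefixes of length `n`, comparable with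
`λ⁻ⁿ = (b⁻ⁿ)ˢ`, where `s = log λ / log b`.

*Upper bound.* By the eigenvector equation, the bound `const * λ⁻ⁿ wt (run η d n)` for the size-`ε`
Hausdorff premeasure of a cylinder passes from the children of a prefix to the prefix, and at deep
levels it holds because a single cylinder of level `N` has diameter at most `b⁻ᴺ`
(`pre_cyl_le`, `hausdorff_cyl_le`). A ball of radius at most `b⁻ⁿ` meets at most five cylinders of
level `n` (`outer_le_five`).

*Lower bound.* Subdividing `[0, 1)` according to the masses gives each prefix an interval whose
length is its mass. Every point of the interval of a surviving prefix is coded by a surviving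
extension of that prefix (`exists_code`). Transporting Lebesgue outer measure along this coding
gives an outer measure `mass` with mass at least `const * λ⁻ⁿ` on cylinders (`le_mass`) and at most
`const * (diam U)ˢ` on sets `U` (`mass_preimage_le`), so the mass distribution principle applies
(`mass_le_hausdorff`).
-/


open MeasureTheory Filter

namespace Paper


/-! ### Codes, weights and intervals -/

/-- Length of the block of digits of `d` ending just before position `n` that agrees
with `η`. -/
def run {b : ℕ} (η d : ℕ → Fin b) : ℕ → ℕ
  | 0 => 0
  | n + 1 => if d n = η n then run η d n + 1 else 0

/-- Codes of the survivor set: digit sequences never agreeing with `η` on `m` consecutive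
positions. -/
def Surv {b : ℕ} (m : ℕ) (η : ℕ → Fin b) : Set (ℕ → Fin b) := {d | ∀ n, run η d n < m}

/-- The Perron weight of the run-length `r`, normalised to be `1` at `r = 0`; it vanishes for
`r ≥ m` because of the truncated subtraction. -/
noncomputable def wt (b m : ℕ) (lam : ℝ) (r : ℕ) : ℝ :=
  ((b : ℝ) - 1) * ∑ i ∈ Finset.range (m - r), lam⁻¹ ^ (i + 1)

/-- The weight of the child obtained from run-length `r` by reading the digit `c` where `e` is the
matching digit. -/
noncomputable def cw (b m : ℕ) (lam : ℝ) (e r c : ℕ) : ℝ :=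
  wt b m lam (if c = e then r + 1 else 0)

/-- Left endpoint of the interval of length `lam⁻¹ ^ n * wt (run d n)` assigned to the
prefix of `d` of length `n`; the children of a prefix subdivide its interval from left to right. -/
noncomputable def left {b : ℕ} (m : ℕ) (lam : ℝ) (η d : ℕ → Fin b) : ℕ → ℝ
  | 0 => 0
  | n + 1 => left m lam η d n +
      lam⁻¹ ^ (n + 1) * ∑ c ∈ Finset.range (d n), cw b m lam (η n) (run η d n) c

/-- The interval assigned to the prefix of `d` of length `n`. -/
def ivl {b : ℕ} (m : ℕ) (lam : ℝ) (η d : ℕ → Fin b) (n : ℕ) : Set ℝ :=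
  Set.Ico (left m lam η d n) (left m lam η d n + lam⁻¹ ^ n * wt b m lam (run η d n))

/-- The integer whose base-`b` expansion is the prefix of `d` of length `n`. -/
def pnum {b : ℕ} (d : ℕ → Fin b) : ℕ → ℕ
  | 0 => 0
  | n + 1 => b * pnum d n + d n

/-! ### Perron weights of the run-lengths -/

section weights

variable {b m : ℕ} {lam : ℝ}

lemma wt_nonneg (hb : 3 ≤ b) (h0 : 0 < lam) (r : ℕ) : 0 ≤ wt b m lam r := by
  have : (3 : ℝ) ≤ b := by exact_mod_cast hb
  have : (0 : ℝ) ≤ (b : ℝ) - 1 := by linarith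
  unfold wt; positivity

lemma wt_eq_zero {r : ℕ} (h : m ≤ r) : wt b m lam r = 0 := by
  simp [wt, Nat.sub_eq_zero_of_le h]

lemma wt_zero (h0 : 0 < lam) (hlam : lam ^ m = ((b : ℝ) - 1) * ∑ i ∈ Finset.range m, lam ^ i) :
    wt b m lam 0 = 1 := by
  have h1 : lam ^ m * ∑ i ∈ Finset.range m, lam⁻¹ ^ (i + 1) = ∑ i ∈ Finset.range m, lam ^ i := by
    rw [← Finset.sum_range_reflect (fun i => lam ^ i), Finset.mul_sum]
    refine Finset.sum_congr rfl fun i hi => ?_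
    have hi := Finset.mem_range.1 hi
    have : m = (m - 1 - i) + (i + 1) := by omega
    conv_lhs => rw [this, pow_add]
    rw [mul_assoc, ← mul_pow, mul_inv_cancel₀ h0.ne', one_pow, mul_one]
  have h2 : lam ^ m * wt b m lam 0 = lam ^ m * 1 := by
    rw [wt, Nat.sub_zero, mul_left_comm, h1, ← hlam, mul_one]
  exact mul_left_cancel₀ (pow_pos h0 m).ne' h2

lemma wt_step (h0 : 0 < lam) {r : ℕ} (h : r < m) :
    lam * wt b m lam r = ((b : ℝ) - 1) + wt b m lam (r + 1) := by
  have : m - r = (m - (r + 1)) + 1 := by omega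
  rw [wt, wt, this, Finset.sum_range_succ', mul_left_comm, mul_add, Finset.mul_sum, zero_add,
    pow_one, mul_inv_cancel₀ h0.ne']
  have : ∀ i ∈ Finset.range (m - (r + 1)), lam * lam⁻¹ ^ (i + 1 + 1) = lam⁻¹ ^ (i + 1) := by
    intro i _
    rw [pow_succ' _ (i + 1), ← mul_assoc, mul_inv_cancel₀ h0.ne', one_mul]
  rw [Finset.sum_congr rfl this]; ring

lemma le_wt (hb : 3 ≤ b) (h0 : 0 < lam) {r : ℕ} (h : r < m) :
    lam⁻¹ * ((b : ℝ) - 1) ≤ wt b m lam r := by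
  have := wt_step (b := b) h0 h
  have h1 := wt_nonneg (m := m) hb h0 (r + 1)
  rw [inv_mul_le_iff₀ h0]; linarith

lemma wt_le_one (hb : 3 ≤ b) (h0 : 0 < lam)
    (hlam : lam ^ m = ((b : ℝ) - 1) * ∑ i ∈ Finset.range m, lam ^ i) (r : ℕ) :
    wt b m lam r ≤ 1 := by
  rw [← wt_zero h0 hlam]
  have : (3 : ℝ) ≤ b := by exact_mod_cast hb
  unfold wt
  refine mul_le_mul_of_nonneg_left ?_ (by linarith)
  refine Finset.sum_le_sum_of_subset_of_nonneg ?_ fun i _ _ => by positivity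
  intro i; simp only [Finset.mem_range]; omega

/-- The Perron eigenvector equation. -/
lemma sum_cw (h0 : 0 < lam) (hlam : lam ^ m = ((b : ℝ) - 1) * ∑ i ∈ Finset.range m, lam ^ i)
    {r e : ℕ} (he : e < b) (h : r < m) :
    ∑ c ∈ Finset.range b, cw b m lam e r c = lam * wt b m lam r := by
  rw [wt_step h0 h]
  have : ∀ c ∈ Finset.range b, cw b m lam e r c
      = 1 + if c = e then wt b m lam (r + 1) - 1 else 0 := by
    intro c _
    unfold cw
    split_ifs
    · ring
    · rw [wt_zero h0 hlam]; ring
  rw [Finset.sum_congr rfl this, Finset.sum_add_distrib, Finset.sum_ite_eq']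
  simp [he]; ring

lemma cw_nonneg (hb : 3 ≤ b) (h0 : 0 < lam) (e r c : ℕ) : 0 ≤ cw b m lam e r c :=
  wt_nonneg hb h0 _

lemma cw_run {η d : ℕ → Fin b} (n : ℕ) :
    cw b m lam (η n) (run η d n) (d n) = wt b m lam (run η d (n + 1)) := by
  simp [cw, run, Fin.ext_iff]

end weights

/-! ### Prefixes and their intervals -/

section codes

variable {b m : ℕ} {lam : ℝ} {η : ℕ → Fin b}

lemma run_congr {d d' : ℕ → Fin b} {n : ℕ} (h : ∀ i < n, d i = d' i) :
    run η d n = run η d' n := by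
  induction n with
  | zero => rfl
  | succ n ih => simp [run, ih fun i hi => h i (by omega), h n (by omega)]

lemma left_congr {d d' : ℕ → Fin b} {n : ℕ} (h : ∀ i < n, d i = d' i) :
    left m lam η d n = left m lam η d' n := by
  induction n with
  | zero => rfl
  | succ n ih =>
    have h' : ∀ i < n, d i = d' i := fun i hi => h i (by omega)
    simp [left, ih h', h n (by omega), run_congr h']

lemma ivl_congr {d d' : ℕ → Fin b} {n : ℕ} (h : ∀ i < n, d i = d' i) :
    ivl m lam η d n = ivl m lam η d' n := by
  simp [ivl, run_congr h, left_congr h]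

lemma pnum_inj {d d' : ℕ → Fin b} {n : ℕ} (h : pnum d n = pnum d' n) :
    ∀ i < n, d i = d' i := by
  induction n with
  | zero => intro i hi; omega
  | succ n ih =>
    simp only [pnum] at h
    have hb : 0 < b := Fin.pos (d n)
    have h1 : (d n : ℕ) = d' n := by
      have := congrArg (· % b) h
      simpa [Nat.mul_add_mod, Nat.mod_eq_of_lt (d n).2, Nat.mod_eq_of_lt (d' n).2] using this
    have h2 : pnum d n = pnum d' n := by
      rw [h1] at h
      exact Nat.eq_of_mul_eq_mul_left hb (by omega)
    intro i hi
    rcases Nat.lt_succ_iff_lt_or_eq.1 hi with hi | rfl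
    · exact ih h2 i hi
    · exact Fin.ext h1

/-- The digits after the first `n` contribute between `0` and `b⁻ⁿ`. -/
lemma pnum_bounds (d : ℕ → Fin b) (n : ℕ) :
    (pnum d n : ℝ) * (b : ℝ)⁻¹ ^ n ≤ Real.ofDigits d ∧
      Real.ofDigits d ≤ (pnum d n + 1) * (b : ℝ)⁻¹ ^ n := by
  have hb : 0 < b := Fin.pos (d 0)
  have hb' : (0 : ℝ) < b := by exact_mod_cast hb
  have key : ∑ i ∈ Finset.range n, Real.ofDigitsTerm d i = (pnum d n : ℝ) * (b : ℝ)⁻¹ ^ n := by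
    induction n with
    | zero => simp [pnum]
    | succ n ih =>
      rw [Finset.sum_range_succ, ih, pnum, Real.ofDigitsTerm]
      push_cast
      rw [inv_pow, inv_pow]
      field_simp
      ring
  rw [Real.ofDigits_eq_sum_add_ofDigits d n, key, inv_pow]
  have h0 := Real.ofDigits_nonneg fun i => d (i + n)
  have h1 := Real.ofDigits_le_one fun i => d (i + n)
  have hp : (0 : ℝ) ≤ ((b : ℝ) ^ n)⁻¹ := by positivity
  constructor <;> nlinarith

/-- Digit sequences whose values lie within `b⁻ⁿ` of a given value have at most five prefixes of
length `n`, so a bound for the individual prefixes bounds the whole. -/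
lemma outer_le_five (ν : OuterMeasure (ℕ → Fin b)) (S : Set (ℕ → Fin b)) (n : ℕ) (M : ENNReal)
    (d₀ : ℕ → Fin b)
    (hS : ∀ d ∈ S, |Real.ofDigits d - Real.ofDigits d₀| ≤ (b : ℝ)⁻¹ ^ n)
    (hM : ∀ d ∈ S, ν {d' ∈ S | ∀ i < n, d' i = d i} ≤ M) : ν S ≤ 5 * M := by
  have hb : (0 : ℝ) < b := by exact_mod_cast Fin.pos (d₀ 0)
  have hp : (0 : ℝ) < (b : ℝ)⁻¹ ^ n := by positivity
  have hsub : S ⊆ ⋃ k ∈ Finset.Icc (pnum d₀ n - 2) (pnum d₀ n + 2), {d ∈ S | pnum d n = k} := by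
    intro d hd
    simp only [Set.mem_iUnion, Finset.mem_Icc]
    refine ⟨pnum d n, ?_, hd, rfl⟩
    have h := abs_le.1 (hS d hd)
    have h1 := pnum_bounds d n
    have h2 := pnum_bounds d₀ n
    have h3 : (pnum d n : ℝ) ≤ pnum d₀ n + 2 := by
      refine le_of_mul_le_mul_right ?_ hp
      nlinarith
    have h4 : (pnum d₀ n : ℝ) ≤ pnum d n + 2 := by
      refine le_of_mul_le_mul_right ?_ hp
      nlinarith
    have h3' : pnum d n ≤ pnum d₀ n + 2 := by exact_mod_cast h3
    have h4' : pnum d₀ n ≤ pnum d n + 2 := by exact_mod_cast h4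
    omega
  refine (measure_mono hsub).trans ((measure_biUnion_finset_le _ _).trans ?_)
  refine (Finset.sum_le_card_nsmul _ _ M ?_).trans ?_
  · intro k _
    rcases Set.eq_empty_or_nonempty {d ∈ S | pnum d n = k} with h | ⟨d, hd, rfl⟩
    · simp [h]
    · exact (measure_mono (t := {d' ∈ S | ∀ i < n, d' i = d i})
        fun d' hd' => ⟨hd'.1, pnum_inj hd'.2⟩).trans (hM d hd)
  · rw [nsmul_eq_mul]
    gcongr
    rw [Nat.card_Icc]
    exact_mod_cast (by omega : pnum d₀ n + 2 + 1 - (pnum d₀ n - 2) ≤ 5)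

/-- The child intervals of a prefix tile its interval, because their weights add up by the
eigenvector equation; in particular each of them lies inside it. -/
lemma ivl_subset (hb : 3 ≤ b) (h0 : 0 < lam)
    (hlam : lam ^ m = ((b : ℝ) - 1) * ∑ i ∈ Finset.range m, lam ^ i)
    {d : ℕ → Fin b} {n : ℕ} (h : run η d n < m) :
    ivl m lam η d (n + 1) ⊆ ivl m lam η d n := by
  have hs := sum_cw h0 hlam (η n).2 h
  have hnn := cw_nonneg (m := m) hb h0 (η n) (run η d n)
  have h1 : 0 ≤ ∑ c ∈ Finset.range (d n), cw b m lam (η n) (run η d n) c :=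
    Finset.sum_nonneg fun c _ => hnn c
  have h2 : ∑ c ∈ Finset.range (d n + 1), cw b m lam (η n) (run η d n) c ≤
      ∑ c ∈ Finset.range b, cw b m lam (η n) (run η d n) c :=
    Finset.sum_le_sum_of_subset_of_nonneg
      (Finset.range_subset_range.2 (d n).2) fun c _ _ => hnn c
  rw [hs, Finset.sum_range_succ, cw_run] at h2
  have hp : 0 < lam⁻¹ ^ (n + 1) := by positivity
  have h3 : lam⁻¹ ^ n = lam⁻¹ ^ (n + 1) * lam := by
    rw [pow_succ, mul_assoc, inv_mul_cancel₀ h0.ne', mul_one]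
  refine Set.Ico_subset_Ico ?_ ?_
  · rw [left]; nlinarith
  · rw [left, h3]; nlinarith

lemma ivl_anti (hb : 3 ≤ b) (h0 : 0 < lam)
    (hlam : lam ^ m = ((b : ℝ) - 1) * ∑ i ∈ Finset.range m, lam ^ i)
    {d : ℕ → Fin b} (hd : d ∈ Surv m η) : Antitone (ivl m lam η d) :=
  antitone_nat_of_succ_le fun n => ivl_subset hb h0 hlam (hd n)

lemma run_lt_of_mem {d : ℕ → Fin b} {n : ℕ} {t : ℝ} (ht : t ∈ ivl m lam η d n) :
    run η d n < m := by
  by_contra h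
  simp [ivl, wt_eq_zero (not_lt.1 h)] at ht

/-- A point of `[0, ∑ F)` lies in one of the consecutive intervals cut out by the partial sums of
`F`. -/
lemma exists_partial_sum (F : ℕ → ℝ) (k : ℕ) (x : ℝ) (h0 : 0 ≤ x)
    (h : x < ∑ c ∈ Finset.range k, F c) :
    ∃ c < k, ∑ i ∈ Finset.range c, F i ≤ x ∧ x < ∑ i ∈ Finset.range (c + 1), F i := by
  induction k with
  | zero => simp at h; linarith
  | succ k ih =>
    by_cases hx : x < ∑ c ∈ Finset.range k, F c
    · obtain ⟨c, hc, h'⟩ := ih hx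
      exact ⟨c, by omega, h'⟩
    · exact ⟨k, by omega, not_lt.1 hx, h⟩

/-- Every point of the interval of a prefix of a surviving code `d₀` is reached by a surviving
code extending that prefix. -/
lemma exists_code (hb : 3 ≤ b) (h0 : 0 < lam)
    (hlam : lam ^ m = ((b : ℝ) - 1) * ∑ i ∈ Finset.range m, lam ^ i)
    {d₀ : ℕ → Fin b} (hd₀ : d₀ ∈ Surv m η) (n₀ : ℕ) {t : ℝ} (ht : t ∈ ivl m lam η d₀ n₀) :
    ∃ d ∈ Surv m η, (∀ i < n₀, d i = d₀ i) ∧ ∀ n, t ∈ ivl m lam η d n := by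
  -- The next digit, as a function of the position, the left endpoint and the run-length so far.
  have hch : ∀ (n : ℕ) (a : ℝ) (r : ℕ), ∃ c : Fin b, (n < n₀ → c = d₀ n) ∧
      (n₀ ≤ n → r < m → a ≤ t → t < a + lam⁻¹ ^ n * wt b m lam r →
        a + lam⁻¹ ^ (n + 1) * ∑ i ∈ Finset.range c, cw b m lam (η n) r i ≤ t ∧
        t < a + lam⁻¹ ^ (n + 1) * ∑ i ∈ Finset.range c, cw b m lam (η n) r i
          + lam⁻¹ ^ (n + 1) * cw b m lam (η n) r c) := by
    intro n a r
    by_cases hn : n < n₀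
    · exact ⟨d₀ n, fun _ => rfl, fun h => by omega⟩
    by_cases hr : r < m ∧ a ≤ t ∧ t < a + lam⁻¹ ^ n * wt b m lam r
    · obtain ⟨hr, h1, h2⟩ := hr
      have hp : 0 < lam ^ (n + 1) := by positivity
      have hs := sum_cw h0 hlam (η n).2 hr
      have hlt : lam ^ (n + 1) * (t - a) < lam * wt b m lam r := by
        have : lam ^ (n + 1) * (t - a) < lam ^ (n + 1) * (lam⁻¹ ^ n * wt b m lam r) :=
          mul_lt_mul_of_pos_left (by linarith) hp
        refine this.trans_eq ?_
        rw [inv_pow]; field_simp; ring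
      obtain ⟨c, hc, h3, h4⟩ := exists_partial_sum (cw b m lam (η n) r) b
        (lam ^ (n + 1) * (t - a)) (mul_nonneg hp.le (by linarith)) (by rw [hs]; exact hlt)
      refine ⟨⟨c, hc⟩, fun h => absurd h hn, fun _ _ _ _ => ?_⟩
      rw [Finset.sum_range_succ] at h4
      have e : lam⁻¹ ^ (n + 1) * (lam ^ (n + 1) * (t - a)) = t - a := by
        rw [← mul_assoc, ← mul_pow, inv_mul_cancel₀ h0.ne', one_pow, one_mul]
      have hq : 0 < lam⁻¹ ^ (n + 1) := by positivity
      have h5 := mul_le_mul_of_nonneg_left h3 hq.le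
      have h6 := mul_lt_mul_of_pos_left h4 hq
      rw [e] at h5 h6
      constructor
      · simp only; linarith
      · simp only; linarith
    · exact ⟨d₀ n, fun _ => rfl, fun _ h1 h2 h3 => absurd ⟨h1, h2, h3⟩ hr⟩
  choose ch hch1 hch2 using hch
  let st : ℕ → ℝ × ℕ := fun n => Nat.rec (0, 0) (fun n s =>
    (s.1 + lam⁻¹ ^ (n + 1) * ∑ i ∈ Finset.range (ch n s.1 s.2), cw b m lam (η n) s.2 i,
      if ch n s.1 s.2 = η n then s.2 + 1 else 0)) n
  let d : ℕ → Fin b := fun n => ch n (st n).1 (st n).2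
  have hst : ∀ n, left m lam η d n = (st n).1 ∧ run η d n = (st n).2 := by
    intro n
    induction n with
    | zero => exact ⟨rfl, rfl⟩
    | succ n ih =>
      constructor
      · rw [left, ih.1, ih.2]
      · rw [run, ih.2]
  have hagree : ∀ i < n₀, d i = d₀ i := fun i hi => hch1 _ _ _ hi
  have hge : ∀ n, n₀ ≤ n → t ∈ ivl m lam η d n := by
    intro n hn
    induction n, hn using Nat.le_induction with
    | base => rwa [ivl_congr hagree]
    | succ n hn ih =>
      have hr := run_lt_of_mem ih
      have := hch2 n (left m lam η d n) (run η d n) hn hr ih.1 ih.2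
      have e : ch n (left m lam η d n) (run η d n) = d n := by rw [(hst n).1, (hst n).2]
      rw [e, cw_run] at this
      exact ⟨this.1, this.2⟩
  have hS : d ∈ Surv m η := by
    intro n
    rcases le_or_gt n₀ n with h | h
    · exact run_lt_of_mem (hge n h)
    · rw [run_congr fun i hi => hagree i (hi.trans h)]
      exact hd₀ n
  refine ⟨d, hS, hagree, fun n => ?_⟩
  rcases le_or_gt n₀ n with h | h
  · exact hge n h
  · exact ivl_anti hb h0 hlam hS h.le (hge n₀ le_rfl)

end codes

/-! ### Mass distribution and Hausdorff measure of cylinders -/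

section measures

variable {b m : ℕ} {lam s : ℝ} {η : ℕ → Fin b}

/-- Surviving codes sharing the first `n` digits of `d`. -/
def Cyl {b : ℕ} (m : ℕ) (η d : ℕ → Fin b) (n : ℕ) : Set (ℕ → Fin b) :=
  {d' ∈ Surv m η | ∀ i < n, d' i = d i}

/-- The mass distribution on codes: a set `S` of codes receives the Lebesgue outer measure of the
set of points of `[0, 1)` coded by the surviving elements of `S`. Working with outer measures
makes any measurability of the coding relation unnecessary. -/
noncomputable def mass {b : ℕ} (m : ℕ) (lam : ℝ) (η : ℕ → Fin b) : OuterMeasure (ℕ → Fin b) :=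
  OuterMeasure.map
    (fun p : {p : (ℕ → Fin b) × ℝ // p.1 ∈ Surv m η ∧ ∀ n, p.2 ∈ ivl m lam η p.1 n} => p.1.1)
    (OuterMeasure.comap
      (fun p : {p : (ℕ → Fin b) × ℝ // p.1 ∈ Surv m η ∧ ∀ n, p.2 ∈ ivl m lam η p.1 n} => p.1.2)
      (volume : Measure ℝ).toOuterMeasure)

lemma mass_apply (S : Set (ℕ → Fin b)) :
    mass m lam η S = volume {t | ∃ d ∈ S, d ∈ Surv m η ∧ ∀ n, t ∈ ivl m lam η d n} := by
  simp only [mass, OuterMeasure.map_apply, OuterMeasure.comap_apply, Measure.toOuterMeasure_apply]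
  congr 1
  ext t
  constructor
  · rintro ⟨⟨⟨d, t⟩, h1, h2⟩, h3, rfl⟩
    exact ⟨d, h3, h1, h2⟩
  · rintro ⟨d, h1, h2, h3⟩
    exact ⟨⟨⟨d, t⟩, h2, h3⟩, h1, rfl⟩

/-- Codes sharing their first `n` digits only code points of one interval, of length at most
`lam⁻¹ ^ n`. -/
lemma mass_le (hb : 3 ≤ b) (h0 : 0 < lam)
    (hlam : lam ^ m = ((b : ℝ) - 1) * ∑ i ∈ Finset.range m, lam ^ i)
    (S : Set (ℕ → Fin b)) (d : ℕ → Fin b) (n : ℕ) :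
    mass m lam η {d' ∈ S | ∀ i < n, d' i = d i} ≤ ENNReal.ofReal (lam⁻¹ ^ n) := by
  rw [mass_apply]
  have hsub : {t | ∃ d' ∈ {d' ∈ S | ∀ i < n, d' i = d i}, d' ∈ Surv m η ∧
      ∀ n, t ∈ ivl m lam η d' n} ⊆ ivl m lam η d n := by
    rintro t ⟨d', hd', -, ht⟩
    rw [← ivl_congr hd'.2]; exact ht n
  refine (measure_mono hsub).trans ?_
  rw [ivl, Real.volume_Ico, add_sub_cancel_left]
  exact ENNReal.ofReal_le_ofReal
    (mul_le_of_le_one_right (by positivity) (wt_le_one hb h0 hlam _))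

/-- A cylinder around a surviving code codes its whole interval, so its mass is at least the length
of that interval. -/
lemma le_mass (hb : 3 ≤ b) (h0 : 0 < lam)
    (hlam : lam ^ m = ((b : ℝ) - 1) * ∑ i ∈ Finset.range m, lam ^ i)
    {d : ℕ → Fin b} (hd : d ∈ Surv m η) (n : ℕ) :
    ENNReal.ofReal (lam⁻¹ ^ n * (lam⁻¹ * ((b : ℝ) - 1))) ≤ mass m lam η (Cyl m η d n) := by
  rw [mass_apply]
  have hsub : ivl m lam η d n ⊆ {t | ∃ d' ∈ Cyl m η d n, d' ∈ Surv m η ∧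
      ∀ n, t ∈ ivl m lam η d' n} := by
    intro t ht
    obtain ⟨d', h1, h2, h3⟩ := exists_code hb h0 hlam hd n ht
    exact ⟨d', ⟨h1, h2⟩, h1, h3⟩
  refine le_trans ?_ (measure_mono hsub)
  rw [ivl, Real.volume_Ico, add_sub_cancel_left]
  exact ENNReal.ofReal_le_ofReal
    (mul_le_mul_of_nonneg_left (le_wt hb h0 (hd n)) (by positivity))

/-- The exponent `s` turns the diameter `b⁻ⁿ` of a cylinder into the scale `lam⁻¹ ^ n` of its
mass. -/
lemma pow_rpow (hβ : (b : ℝ)⁻¹ ^ s = lam⁻¹) (n : ℕ) :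
    ((b : ℝ)⁻¹ ^ n) ^ s = lam⁻¹ ^ n := by
  rw [← Real.rpow_natCast, ← Real.rpow_mul (by positivity), mul_comm,
    Real.rpow_mul (by positivity), hβ, Real.rpow_natCast]

/-- The mass of the codes of `U` is at most a constant times `diam U ^ s`. -/
lemma mass_preimage_le (hb : 3 ≤ b) (h1 : 1 < lam) (hs : 0 < s)
    (hlam : lam ^ m = ((b : ℝ) - 1) * ∑ i ∈ Finset.range m, lam ^ i)
    (hβ : (b : ℝ)⁻¹ ^ s = lam⁻¹) (U : Set ℝ) (hU : Metric.ediam U ≤ 1) :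
    mass m lam η (Real.ofDigits ⁻¹' U) ≤ ENNReal.ofReal (5 * lam) * Metric.ediam U ^ s := by
  have h0 : 0 < lam := by linarith
  have hb3 : (3 : ℝ) ≤ b := by exact_mod_cast hb
  have hbp : (0 : ℝ) < (b : ℝ)⁻¹ := by positivity
  have hb1 : (b : ℝ)⁻¹ < 1 := inv_lt_one_of_one_lt₀ (by linarith)
  have hne : Metric.ediam U ≠ ⊤ := ne_top_of_le_ne_top ENNReal.one_ne_top hU
  have key : ∀ n : ℕ, (Metric.ediam U).toReal ≤ (b : ℝ)⁻¹ ^ n →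
      mass m lam η (Real.ofDigits ⁻¹' U) ≤ ENNReal.ofReal (5 * lam⁻¹ ^ n) := by
    intro n hn
    rcases Set.eq_empty_or_nonempty (Real.ofDigits ⁻¹' U : Set (ℕ → Fin b)) with h | ⟨d₀, hd₀⟩
    · simp [h]
    rw [ENNReal.ofReal_mul (by norm_num), ENNReal.ofReal_ofNat]
    refine outer_le_five _ _ n _ d₀ (fun d hd => ?_) fun d _ => mass_le hb h0 hlam _ d n
    rw [← Real.dist_eq, dist_edist]
    exact (ENNReal.toReal_mono hne (Metric.edist_le_ediam_of_mem hd hd₀)).trans hn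
  rcases (ENNReal.toReal_nonneg (a := Metric.ediam U)).eq_or_lt with h | h
  · -- A set of zero diameter lies in cylinders of every level, hence has zero mass.
    have hlim : Tendsto (fun n : ℕ => ENNReal.ofReal (5 * lam⁻¹ ^ n)) atTop (nhds 0) := by
      have := (tendsto_pow_atTop_nhds_zero_of_lt_one (inv_nonneg.2 h0.le)
        (inv_lt_one_of_one_lt₀ h1)).const_mul 5
      simpa using ENNReal.tendsto_ofReal this
    have := ge_of_tendsto' hlim fun n => key n (by rw [← h]; positivity)
    exact this.trans zero_le
  · have hle : (Metric.ediam U).toReal ≤ 1 := by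
      simpa using ENNReal.toReal_mono ENNReal.one_ne_top hU
    obtain ⟨n, hn1, hn2⟩ := exists_nat_pow_near_of_lt_one h hle hbp hb1
    refine (key n hn2).trans ?_
    rw [← ENNReal.ofReal_toReal hne, ENNReal.ofReal_rpow_of_nonneg h.le hs.le,
      ← ENNReal.ofReal_mul (by positivity)]
    refine ENNReal.ofReal_le_ofReal ?_
    have h3 : lam⁻¹ ^ (n + 1) ≤ (Metric.ediam U).toReal ^ s := by
      rw [← pow_rpow hβ]
      exact Real.rpow_le_rpow (by positivity) hn1.le hs.le
    have h4 : lam⁻¹ ^ n = lam * lam⁻¹ ^ (n + 1) := by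
      rw [pow_succ', ← mul_assoc, mul_inv_cancel₀ h0.ne', one_mul]
    rw [h4, mul_assoc]
    gcongr

/-- Mass distribution principle. -/
lemma mass_le_hausdorff (hb : 3 ≤ b) (h1 : 1 < lam) (hs : 0 < s)
    (hlam : lam ^ m = ((b : ℝ) - 1) * ∑ i ∈ Finset.range m, lam ^ i)
    (hβ : (b : ℝ)⁻¹ ^ s = lam⁻¹) (E : Set ℝ) :
    mass m lam η (Real.ofDigits ⁻¹' E) ≤
      ENNReal.ofReal (5 * lam) * Measure.hausdorffMeasure s E := by
  have hc0 : ENNReal.ofReal (5 * lam) ≠ 0 := by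
    simp only [ne_eq, ENNReal.ofReal_eq_zero, not_le]; linarith
  have hle : (ENNReal.ofReal (5 * lam))⁻¹ • OuterMeasure.map Real.ofDigits (mass m lam η) ≤
      OuterMeasure.mkMetric (fun r : ENNReal => r ^ s) := by
    refine OuterMeasure.le_mkMetric _ _ 1 one_pos fun U hU => ?_
    rw [_root_.smul_apply, smul_eq_mul, ENNReal.inv_mul_le_iff hc0 ENNReal.ofReal_ne_top]
    exact mass_preimage_le hb h1 hs hlam hβ U hU
  have h := hle E
  rw [_root_.smul_apply, smul_eq_mul, ENNReal.inv_mul_le_iff hc0 ENNReal.ofReal_ne_top,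
    ← Measure.mkMetric_toOuterMeasure] at h
  exact h

/-- The size-`ε` Hausdorff premeasure of a cylinder, estimated by splitting it into subcylinders
of a level `n + j` so deep that their diameters are at most `ε`. The weights make the
estimate stable under passing from the children of a prefix to the prefix. -/
lemma pre_cyl_le (hb : 3 ≤ b) (h0 : 0 < lam) (hs : 0 < s)
    (hlam : lam ^ m = ((b : ℝ) - 1) * ∑ i ∈ Finset.range m, lam ^ i)
    (hβ : (b : ℝ)⁻¹ ^ s = lam⁻¹) (ε : ENNReal) (j : ℕ) :
    ∀ (n : ℕ) (_ : ENNReal.ofReal ((b : ℝ)⁻¹ ^ (n + j)) ≤ ε) (d : ℕ → Fin b),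
      OuterMeasure.mkMetric'.pre (fun U : Set ℝ => Metric.ediam U ^ s) ε
        (Real.ofDigits '' Cyl m η d n) ≤
      ENNReal.ofReal (lam / ((b : ℝ) - 1) * (lam⁻¹ ^ n * wt b m lam (run η d n))) := by
  have hb3 : (3 : ℝ) ≤ b := by exact_mod_cast hb
  have hb1 : (0 : ℝ) < (b : ℝ) - 1 := by linarith
  induction j with
  | zero =>
    intro n hε d
    rcases Set.eq_empty_or_nonempty (Cyl m η d n) with h | ⟨d', hd'⟩
    · simp [h]
    have hr : run η d n < m := run_congr (η := η) hd'.2 ▸ hd'.1 n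
    have hdiam : Metric.ediam (Real.ofDigits '' Cyl m η d n) ≤ ENNReal.ofReal ((b : ℝ)⁻¹ ^ n) := by
      refine Metric.ediam_le ?_
      rintro _ ⟨d₁, hd₁, rfl⟩ _ ⟨d₂, hd₂, rfl⟩
      rw [edist_dist, Real.dist_eq, inv_pow]
      exact ENNReal.ofReal_le_ofReal (Real.abs_ofDigits_sub_ofDigits_le
        fun i hi => (hd₁.2 i hi).trans (hd₂.2 i hi).symm)
    refine (OuterMeasure.mkMetric'.pre_le (hdiam.trans hε)).trans ?_
    refine (ENNReal.rpow_le_rpow hdiam hs.le).trans ?_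
    rw [ENNReal.ofReal_rpow_of_nonneg (by positivity) hs.le, pow_rpow hβ]
    refine ENNReal.ofReal_le_ofReal ?_
    have h1 : lam⁻¹ ^ n = lam / ((b : ℝ) - 1) * (lam⁻¹ ^ n * (lam⁻¹ * ((b : ℝ) - 1))) := by
      field_simp
    conv_lhs => rw [h1]
    gcongr
    exact le_wt hb h0 hr
  | succ j ih =>
    intro n hε d
    rcases Set.eq_empty_or_nonempty (Cyl m η d n) with h | ⟨d', hd'⟩
    · simp [h]
    have hr : run η d n < m := run_congr (η := η) hd'.2 ▸ hd'.1 n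
    have hsub : Real.ofDigits '' Cyl m η d n ⊆
        ⋃ c ∈ (Finset.univ : Finset (Fin b)),
          Real.ofDigits '' Cyl m η (Function.update d n c) (n + 1) := by
      rintro _ ⟨d₁, hd₁, rfl⟩
      simp only [Set.mem_iUnion, Finset.mem_univ, exists_true_left]
      refine ⟨d₁ n, d₁, ⟨hd₁.1, fun i hi => ?_⟩, rfl⟩
      rcases Nat.lt_succ_iff_lt_or_eq.1 hi with hi | rfl
      · rw [Function.update_of_ne hi.ne, hd₁.2 i hi]
      · simp
    refine (measure_mono hsub).trans ((measure_biUnion_finset_le _ _).trans ?_)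
    refine (Finset.sum_le_sum fun c _ => ih (n + 1)
      (by rwa [add_right_comm, add_assoc]) (Function.update d n c)).trans ?_
    rw [← ENNReal.ofReal_sum_of_nonneg]
    · refine ENNReal.ofReal_le_ofReal (le_of_eq ?_)
      have hw : ∀ c : Fin b, wt b m lam (run η (Function.update d n c) (n + 1)) =
          cw b m lam (η n) (run η d n) c := by
        intro c
        rw [← cw_run, Function.update_self]
        congr 1
        exact run_congr fun i hi => Function.update_of_ne hi.ne _ _
      simp only [hw]
      rw [← Finset.mul_sum, ← Finset.mul_sum,
        Fin.sum_univ_eq_sum_range (fun c => cw b m lam (η n) (run η d n) c) b,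
        sum_cw h0 hlam (η n).2 hr, pow_succ]
      field_simp
    · intro c _
      have := wt_nonneg (m := m) hb h0 (run η (Function.update d n c) (n + 1))
      positivity

/-- Letting the mesh tend to zero in the premeasure estimate bounds the Hausdorff measure of a
cylinder of level `n` by a constant times `lam⁻¹ ^ n`. -/
lemma hausdorff_cyl_le (hb : 3 ≤ b) (h0 : 0 < lam) (hs : 0 < s)
    (hlam : lam ^ m = ((b : ℝ) - 1) * ∑ i ∈ Finset.range m, lam ^ i)
    (hβ : (b : ℝ)⁻¹ ^ s = lam⁻¹) (n : ℕ) (d : ℕ → Fin b) :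
    Measure.hausdorffMeasure s (Real.ofDigits '' Cyl m η d n) ≤
      ENNReal.ofReal (lam / ((b : ℝ) - 1) * lam⁻¹ ^ n) := by
  have hb3 : (3 : ℝ) ≤ b := by exact_mod_cast hb
  have hb1 : (0 : ℝ) < (b : ℝ) - 1 := by linarith
  have e : Measure.hausdorffMeasure s (Real.ofDigits '' Cyl m η d n) =
      OuterMeasure.mkMetric (fun r : ENNReal => r ^ s) (Real.ofDigits '' Cyl m η d n) := by
    rw [← Measure.mkMetric_toOuterMeasure]; rfl
  rw [e, OuterMeasure.mkMetric, OuterMeasure.mkMetric']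
  simp only [OuterMeasure.iSup_apply]
  refine iSup₂_le fun ε hε => ?_
  have hlim : Tendsto (fun j : ℕ => ENNReal.ofReal ((b : ℝ)⁻¹ ^ (n + j))) atTop (nhds 0) := by
    have h := (tendsto_pow_atTop_nhds_zero_of_lt_one (r := (b : ℝ)⁻¹) (by positivity)
      (inv_lt_one_of_one_lt₀ (by linarith))).const_mul ((b : ℝ)⁻¹ ^ n)
    simpa [pow_add] using ENNReal.tendsto_ofReal h
  obtain ⟨j, hj⟩ := (hlim.eventually_lt_const hε).exists
  refine (pre_cyl_le hb h0 hs hlam hβ ε j n hj.le d).trans (ENNReal.ofReal_le_ofReal ?_)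
  gcongr
  exact mul_le_of_le_one_right (by positivity) (wt_le_one hb h0 hlam _)

end measures

/-! ### The survivor set in terms of run-lengths -/

section survivor

variable {b m : ℕ}

lemma run_spec (η d : ℕ → Fin b) (n : ℕ) :
    run η d n ≤ n ∧ ∀ i < n, n ≤ i + run η d n → d i = η i := by
  induction n with
  | zero => simp [run]
  | succ n ih =>
    rw [run]
    split_ifs with h
    · refine ⟨by omega, fun i hi hi' => ?_⟩
      rcases Nat.lt_succ_iff_lt_or_eq.1 hi with hi | rfl
      · exact ih.2 i hi (by omega)
      · exact h
    · exact ⟨by omega, fun i hi hi' => by omega⟩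

lemma le_run {η d : ℕ → Fin b} {k : ℕ} : ∀ j : ℕ, (∀ i < j, d (k + i) = η (k + i)) →
    j ≤ run η d (k + j)
  | 0, _ => Nat.zero_le _
  | j + 1, h => by
    have := le_run j fun i hi => h i (by omega)
    rw [← add_assoc, run, if_pos (h j (by omega))]
    omega

/-- A run-length reaches `m` exactly when some window of `m` digits agrees with `η`. -/
lemma mem_surv_iff (η d : ℕ → Fin b) :
    d ∈ Surv m η ↔ ∀ k, ¬ ∀ i < m, d (k + i) = η (k + i) := by
  constructor
  · intro h k hk
    exact absurd (h (k + m)) (not_lt.2 (le_run m hk))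
  · intro h n
    by_contra hn
    have hs := run_spec η d n
    exact h (n - m) fun i hi => hs.2 _ (by omega) (by omega)

/-- Progressive overlapping forces the forbidden words to be the windows of a single sequence. -/
lemma window_eq (hm : 2 ≤ m) {ω : ℕ → Fin m → Fin b}
    (hω : ∀ k : ℕ, 1 ≤ k → ProgOverlapAt b m ω k) (k : ℕ) (j : Fin m) :
    ω k j = ω (k + j) ⟨0, by omega⟩ := by
  rcases Nat.eq_zero_or_pos j with h | h
  · obtain rfl : j = ⟨0, lt_of_lt_of_le two_pos hm⟩ := Fin.ext h
    rfl
  · have := hω (k + j) (by omega) j h (by have := j.2; omega) 0 (by have := j.2; omega)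
    simpa using this.symm

lemma Kset_eq (hm : 2 ≤ m) {ω : ℕ → Fin m → Fin b}
    (hω : ∀ k : ℕ, 1 ≤ k → ProgOverlapAt b m ω k) :
    Kset b m ω = Real.ofDigits '' Surv m fun n => ω n ⟨0, by omega⟩ := by
  ext x
  have hd : ∀ d : ℕ → Fin b, ∑' i : ℕ, ((d i : ℕ) : ℝ) / (b : ℝ) ^ (i + 1) = Real.ofDigits d :=
    fun d => by simp only [Real.ofDigits, Real.ofDigitsTerm, div_eq_mul_inv]
  have hS : ∀ d : ℕ → Fin b, (∀ k : ℕ, (fun j : Fin m => d (k + j.1)) ≠ ω k) ↔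
      d ∈ Surv m fun n => ω n ⟨0, by omega⟩ := by
    intro d
    rw [mem_surv_iff]
    refine forall_congr' fun k => not_congr ?_
    rw [funext_iff, Fin.forall_iff]
    simp only [window_eq hm hω k]
  constructor
  · rintro ⟨d, h1, rfl⟩
    exact ⟨d, (hS d).1 h1, (hd d).symm⟩
  · rintro ⟨d, h1, rfl⟩
    exact ⟨d, (hS d).2 h1, (hd d).symm⟩

end survivor

/-- **Theorem 1.2 (i).** If `ω` is progressively overlapping, then `K^ω` is
`(log λ / log b)`-Ahlfors regular, where `λ ∈ (b-1, b)` is the root of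
`x^m = (b-1)(x^{m-1} + ⋯ + x + 1)`. -/
theorem ahlfors_regular_of_progressively_overlapping (b m : ℕ) (hb : 3 ≤ b) (hm : 2 ≤ m)
    (ω : ℕ → Fin m → Fin b) (hω : ∀ k : ℕ, 1 ≤ k → ProgOverlapAt b m ω k)
    (lam : ℝ) (hlam1 : (b : ℝ) - 1 < lam) (hlam2 : lam < (b : ℝ))
    (hlam : lam ^ m = ((b : ℝ) - 1) * ∑ i ∈ Finset.range m, lam ^ i) :
    AhlforsRegular (Kset b m ω) (Real.log lam / Real.log b) := by
  have hb3 : (3 : ℝ) ≤ b := by exact_mod_cast hb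
  have hl1 : 1 < lam := by linarith
  have h0 : 0 < lam := by linarith
  have hlb : 0 < Real.log b := Real.log_pos (by linarith)
  have hbp : (0 : ℝ) < (b : ℝ)⁻¹ := by positivity
  have hb1 : (b : ℝ)⁻¹ < 1 := inv_lt_one_of_one_lt₀ (by linarith)
  rw [Kset_eq hm hω]
  set η : ℕ → Fin b := fun n => ω n ⟨0, by omega⟩
  set s := Real.log lam / Real.log b with hsdef
  have hs : 0 < s := div_pos (Real.log_pos hl1) hlb
  have hβ : (b : ℝ)⁻¹ ^ s = lam⁻¹ := by
    rw [Real.inv_rpow (by positivity), Real.rpow_def_of_pos (by linarith), hsdef,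
      mul_div_cancel₀ _ hlb.ne', Real.exp_log h0]
  refine ⟨5 * lam ^ 3, ?_, ?_⟩
  · have := one_le_pow₀ hl1.le (n := 3)
    linarith
  rintro _ ⟨d, hd, rfl⟩ r hr0 hr1
  obtain ⟨n, hn1, hn2⟩ := exists_nat_pow_near_of_lt_one hr0 hr1.le hbp hb1
  have hlow : lam⁻¹ ^ (n + 1) ≤ r ^ s := by
    rw [← pow_rpow hβ]; exact Real.rpow_le_rpow (by positivity) hn1.le hs.le
  have hupp : r ^ s ≤ lam⁻¹ ^ n := by
    rw [← pow_rpow hβ]; exact Real.rpow_le_rpow hr0.le hn2 hs.le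
  have hpn : lam⁻¹ ^ n = lam * lam⁻¹ ^ (n + 1) := by
    rw [pow_succ', ← mul_assoc, mul_inv_cancel₀ h0.ne', one_mul]
  set E := Real.ofDigits '' Surv m η ∩ Metric.closedBall (Real.ofDigits d) r with hE
  constructor
  · -- The ball contains the cylinder of level `n + 1` around `d`.
    have hsub : Cyl m η d (n + 1) ⊆ Real.ofDigits ⁻¹' E := by
      intro d' hd'
      refine ⟨⟨d', hd'.1, rfl⟩, ?_⟩
      rw [Metric.mem_closedBall, Real.dist_eq]
      refine (Real.abs_ofDigits_sub_ofDigits_le hd'.2).trans ?_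
      rw [← inv_pow]; exact hn1.le
    have h1 := (le_mass hb h0 hlam hd (n + 1)).trans ((measure_mono hsub).trans
      (mass_le_hausdorff hb hl1 hs hlam hβ E))
    have hc0 : ENNReal.ofReal (5 * lam) ≠ 0 := by
      simp only [ne_eq, ENNReal.ofReal_eq_zero, not_le]; linarith
    rw [← ENNReal.inv_mul_le_iff hc0 ENNReal.ofReal_ne_top,
      ← ENNReal.ofReal_inv_of_pos (by linarith), ← ENNReal.ofReal_mul (by positivity)] at h1
    refine le_trans (ENNReal.ofReal_le_ofReal ?_) h1
    calc (5 * lam ^ 3)⁻¹ * r ^ s ≤ (5 * lam ^ 3)⁻¹ * (lam * lam⁻¹ ^ (n + 1)) := by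
          rw [← hpn]; gcongr
      _ = (5 * lam)⁻¹ * (lam⁻¹ ^ (n + 1) * (lam⁻¹ * 1)) := by field_simp
      _ ≤ (5 * lam)⁻¹ * (lam⁻¹ ^ (n + 1) * (lam⁻¹ * ((b : ℝ) - 1))) := by
          gcongr; linarith
  · -- The ball meets at most five cylinders of level `n`.
    let S : Set (ℕ → Fin b) := {d' ∈ Surv m η | |Real.ofDigits d' - Real.ofDigits d| ≤ r}
    have hES : E = Real.ofDigits '' S := by
      ext x
      constructor
      · rintro ⟨⟨d', hd', rfl⟩, hx⟩
        exact ⟨d', ⟨hd', by simpa [Real.dist_eq] using hx⟩, rfl⟩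
      · rintro ⟨d', hd', rfl⟩
        exact ⟨⟨d', hd'.1, rfl⟩, by simpa [Real.dist_eq] using hd'.2⟩
    have h5 := outer_le_five
      (OuterMeasure.comap Real.ofDigits (Measure.hausdorffMeasure s : Measure ℝ).toOuterMeasure)
      S n (ENNReal.ofReal (lam / ((b : ℝ) - 1) * lam⁻¹ ^ n)) d
      (fun d' hd' => hd'.2.trans hn2) (fun d' _ => ?_)
    · rw [OuterMeasure.comap_apply, Measure.toOuterMeasure_apply, ← hES] at h5
      refine h5.trans ?_
      rw [← ENNReal.ofReal_ofNat 5, ← ENNReal.ofReal_mul (by norm_num)]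
      refine ENNReal.ofReal_le_ofReal ?_
      have h6 : lam / ((b : ℝ) - 1) ≤ lam := div_le_self h0.le (by linarith)
      have h7 : lam ^ 2 ≤ lam ^ 3 := pow_le_pow_right₀ hl1.le (by norm_num)
      calc 5 * (lam / ((b : ℝ) - 1) * lam⁻¹ ^ n) ≤ 5 * (lam * lam⁻¹ ^ n) := by gcongr
        _ = 5 * lam ^ 2 * lam⁻¹ ^ (n + 1) := by rw [hpn]; ring
        _ ≤ 5 * lam ^ 3 * r ^ s := by gcongr
    · rw [OuterMeasure.comap_apply, Measure.toOuterMeasure_apply]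
      refine (measure_mono (Set.image_mono ?_)).trans
        (hausdorff_cyl_le (η := η) hb h0 hs hlam hβ n d')
      exact fun d'' h => ⟨h.1.1, h.2⟩

end Paper
end
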